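/- arXiv:2101.07233 — 4 statements merged into one kernel-verified Lean document; each statement's English description precedes it below -/
import Mathlib

section
/- Let C be a nonempty strict subset of V, F = V∖C, and define the block matrix P = [[I, −L_FF⁻¹ L_FC], [0, I]] · blockdiag(L_FF⁻¹, SC(L, C)†) · [[I, 0], [−L_CF L_FF⁻¹, I]], with blocks indexed by F then C. Then P is symmetric and L P L = L; consequently, for all x, y ∈ ℝ^V with 1ᵀ x = 1ᵀ y = 0, one has yᵀ L† x = yᵀ P x. -/
open Matrix

/-- The four Penrose conditions characterizing the Moore–Penrose pseudoinverse. -/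
def IsMoorePenrose {n : Type*} [Fintype n] (M Md : Matrix n n ℝ) : Prop :=
  M * Md * M = M ∧ Md * M * Md = Md ∧ (M * Md)ᵀ = M * Md ∧ (Md * M)ᵀ = Md * M


lemma mp_symm_aux {n : Type*} [Fintype n] (A X : Matrix n n ℝ) (hA : Aᵀ = A)
    (h : IsMoorePenrose A X) : Xᵀ = X := by
  obtain ⟨h1, h2, h3, h4⟩ := h
  rw [transpose_mul, hA] at h3 h4
  have h1' : A * Xᵀ * A = A := by
    have := congrArg transpose h1
    rwa [transpose_mul, transpose_mul, hA, ← Matrix.mul_assoc] at this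
  have h2' : Xᵀ * A * Xᵀ = Xᵀ := by
    have := congrArg transpose h2
    rwa [transpose_mul, transpose_mul, hA, ← Matrix.mul_assoc] at this
  have e1 : A * X = (A * Xᵀ) * (A * X) := by
    rw [← Matrix.mul_assoc, h1']
  have e2 : A * X = (A * X) * (A * Xᵀ) := by
    have := congrArg transpose e1
    simp only [transpose_mul, hA, transpose_transpose] at this
    rwa [h3, ← h4] at this
  have e3 : A * X = A * Xᵀ := by
    rw [e2, ← Matrix.mul_assoc, h1]
  symm
  calc X = X * A * X := h2.symm
    _ = X * (A * Xᵀ) := by rw [Matrix.mul_assoc, e3]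
    _ = (X * A) * Xᵀ := by rw [Matrix.mul_assoc]
    _ = (Xᵀ * A) * Xᵀ := by rw [← h4, ← e3, ← h3]
    _ = Xᵀ := h2'

lemma psd_aux {V E : Type*} [Fintype V] [Fintype E] [DecidableEq E]
    (r : E → ℝ) (hr : ∀ e, 0 < r e) (B : Matrix E V ℝ) (x : V → ℝ)
    (h : x ⬝ᵥ ((Bᵀ * Matrix.diagonal (fun e => (r e)⁻¹) * B) *ᵥ x) = 0) :
    (Bᵀ * Matrix.diagonal (fun e => (r e)⁻¹) * B) *ᵥ x = 0 := by
  rw [← Matrix.mulVec_mulVec, ← Matrix.mulVec_mulVec, Matrix.dotProduct_mulVec,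
    Matrix.vecMul_transpose] at h
  have hz : B *ᵥ x = 0 := by
    simp only [dotProduct, Matrix.mulVec_diagonal] at h
    rw [Finset.sum_eq_zero_iff_of_nonneg] at h
    · funext e
      have := h e (Finset.mem_univ _)
      have hp := (inv_pos.2 (hr e)).ne'
      simpa [hp] using this
    · intro e _
      have hp := (inv_pos.2 (hr e)).le
      have : 0 ≤ (r e)⁻¹ * ((B *ᵥ x) e * (B *ᵥ x) e) := mul_nonneg hp (mul_self_nonneg _)
      linarith
  rw [← Matrix.mulVec_mulVec, hz, Matrix.mulVec_zero]

lemma block_aux {m n : Type*} [Fintype m] [Fintype n] [DecidableEq m] [DecidableEq n]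
    (A : Matrix m m ℝ) (B : Matrix m n ℝ) (C : Matrix n m ℝ) (D S X : Matrix n n ℝ)
    (hA : IsUnit A.det) (hS : S = D - C * A⁻¹ * B) (h : S * X * S = S) :
    fromBlocks A B C D * (fromBlocks 1 (-(A⁻¹ * B)) 0 1 * fromBlocks A⁻¹ 0 0 X *
      fromBlocks 1 0 (-(C * A⁻¹)) 1) * fromBlocks A B C D = fromBlocks A B C D := by
  have i1 : A * A⁻¹ = 1 := Matrix.mul_nonsing_inv A hA
  have i2 : A⁻¹ * A = 1 := Matrix.nonsing_inv_mul A hA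
  have e1 : fromBlocks A B C D * fromBlocks 1 (-(A⁻¹ * B)) 0 1 = fromBlocks A 0 C S := by
    rw [fromBlocks_multiply, hS]
    simp [← Matrix.mul_assoc, i1, sub_eq_add_neg, add_comm]
  have e2 : fromBlocks 1 0 (-(C * A⁻¹)) 1 * fromBlocks A B C D = fromBlocks A B 0 S := by
    rw [fromBlocks_multiply, hS]
    simp [Matrix.mul_assoc, i2, sub_eq_add_neg, add_comm]
  calc _ = (fromBlocks A B C D * fromBlocks 1 (-(A⁻¹ * B)) 0 1) * fromBlocks A⁻¹ 0 0 X *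
      (fromBlocks 1 0 (-(C * A⁻¹)) 1 * fromBlocks A B C D) := by
        simp only [Matrix.mul_assoc]
    _ = _ := by
      rw [e1, e2, fromBlocks_multiply, fromBlocks_multiply]
      simp only [Matrix.mul_zero, Matrix.zero_mul, add_zero, zero_add, i1, Matrix.one_mul, h]
      rw [Matrix.mul_assoc C, i2, Matrix.mul_one, hS]
      congr 1
      abel

/-- Lemma `cholesky`: the block Cholesky factorization
`P = [[I, −L_FF⁻¹L_FC],[0,I]] · blockdiag(L_FF⁻¹, SC(L,C)†) · [[I,0],[−L_CF L_FF⁻¹,I]]`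
is symmetric, satisfies `L P L = L`, and hence agrees with `L†` on mean-zero vectors. -/
theorem cholesky_factorization_pseudoinverse {V E : Type*} [Fintype V] [Fintype E]
    [DecidableEq V] [DecidableEq E] [Nonempty E]
    (head tail : E → V) (s t : V) (hst : s ≠ t)
    (r : E → ℝ) (hr : ∀ e, 0 < r e)
    (B : Matrix E V ℝ)
    (hB : ∀ e v, B e v = (if v = head e then (1 : ℝ) else 0) - (if v = tail e then 1 else 0))
    (L : Matrix V V ℝ)
    (hL : L = Bᵀ * Matrix.diagonal (fun e => (r e)⁻¹) * B)
    (hconn : ∀ x : V → ℝ, L *ᵥ x = 0 → ∀ v w : V, x v = x w)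
    (Ld : Matrix V V ℝ) (hLd : IsMoorePenrose L Ld)
    (C : Set V) [DecidablePred (· ∈ C)] (hC : C.Nonempty) (hCne : C ≠ Set.univ)
    (LFF : Matrix {v // v ∉ C} {v // v ∉ C} ℝ) (hLFF : LFF = Matrix.of fun a b => L a.1 b.1)
    (LFC : Matrix {v // v ∉ C} {v // v ∈ C} ℝ) (hLFC : LFC = Matrix.of fun a b => L a.1 b.1)
    (LCF : Matrix {v // v ∈ C} {v // v ∉ C} ℝ) (hLCF : LCF = Matrix.of fun a b => L a.1 b.1)
    (LCC : Matrix {v // v ∈ C} {v // v ∈ C} ℝ) (hLCC : LCC = Matrix.of fun a b => L a.1 b.1)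
    (SC : Matrix {v // v ∈ C} {v // v ∈ C} ℝ) (hSC : SC = LCC - LCF * LFF⁻¹ * LFC)
    (SCd : Matrix {v // v ∈ C} {v // v ∈ C} ℝ) (hSCd : IsMoorePenrose SC SCd)
    (P : Matrix V V ℝ)
    (hP : P =
      (Matrix.fromBlocks 1 (-(LFF⁻¹ * LFC)) 0 1 *
          Matrix.fromBlocks LFF⁻¹ 0 0 SCd *
            Matrix.fromBlocks 1 0 (-(LCF * LFF⁻¹)) 1).submatrix
        (fun v => if h : v ∈ C then Sum.inr (⟨v, h⟩ : {v // v ∈ C})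
          else Sum.inl (⟨v, h⟩ : {v // v ∉ C}))
        (fun v => if h : v ∈ C then Sum.inr (⟨v, h⟩ : {v // v ∈ C})
          else Sum.inl (⟨v, h⟩ : {v // v ∉ C}))) :
    Pᵀ = P ∧ L * P * L = L ∧
      ∀ x y : V → ℝ, ∑ v, x v = 0 → ∑ v, y v = 0 →
        y ⬝ᵥ (Ld *ᵥ x) = y ⬝ᵥ (P *ᵥ x) := by
  have hLs : Lᵀ = L := by
    rw [hL]; simp [Matrix.mul_assoc]
  have hLsym : ∀ a b, L a b = L b a := fun a b => congrFun (congrFun hLs b) a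
  have hpsd : ∀ x : V → ℝ, x ⬝ᵥ (L *ᵥ x) = 0 → L *ᵥ x = 0 := by
    intro x h
    rw [hL] at h ⊢
    exact psd_aux r hr B x h
  have hone : L *ᵥ (fun _ => (1 : ℝ)) = 0 := by
    have : B *ᵥ (fun _ => (1 : ℝ)) = 0 := by
      funext e
      simp [Matrix.mulVec, dotProduct, hB]
    rw [hL, ← Matrix.mulVec_mulVec, this, Matrix.mulVec_zero]
  -- invertibility of LFF
  have hU : IsUnit LFF.det := by
    rw [isUnit_iff_ne_zero]
    intro hdet
    obtain ⟨z, hz0, hz⟩ := Matrix.exists_mulVec_eq_zero_iff.2 hdet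
    let x : V → ℝ := fun v => if h : v ∈ C then 0 else z ⟨v, h⟩
    have hsum : ∀ f : V → ℝ, ∑ v, f v * x v = ∑ a : {v // v ∉ C}, f a.1 * z a := by
      intro f
      rw [← Fintype.sum_subtype_add_sum_subtype (fun v => v ∈ C)]
      have h1 : ∑ i : {v // v ∈ C}, f i.1 * x i.1 = 0 := by
        apply Finset.sum_eq_zero
        intro i _
        simp [x, i.2]
      have h2 : ∀ i : {v // v ∉ C}, x i.1 = z i := by
        intro i
        simp [x, i.2]
      simp only [h1, h2, zero_add]
    have hLx : ∀ a : {v // v ∉ C}, (L *ᵥ x) a.1 = 0 := by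
      intro a
      have := congrFun hz a
      simp only [Matrix.mulVec, dotProduct, hLFF, Matrix.of_apply] at this
      simp only [Matrix.mulVec, dotProduct]
      rw [hsum]
      exact this
    have hq : x ⬝ᵥ (L *ᵥ x) = 0 := by
      rw [dotProduct_comm]
      simp only [dotProduct]
      rw [hsum]
      simp [hLx]
    have hc := hconn x (hpsd x hq)
    obtain ⟨c, hc'⟩ := hC
    apply hz0
    funext a
    have := hc a.1 c
    simpa [x, a.2, hc'] using this
  have hLFFs : LFFᵀ = LFF := by
    ext a b; simp [hLFF, hLsym b.1 a.1]
  have hLFCs : LFCᵀ = LCF := by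
    ext a b; simp [hLFC, hLCF, hLsym b.1 a.1]
  have hLCFs : LCFᵀ = LFC := by
    rw [← hLFCs, transpose_transpose]
  have hLCCs : LCCᵀ = LCC := by
    ext a b; simp [hLCC, hLsym b.1 a.1]
  have hSCs : SCᵀ = SC := by
    rw [hSC]
    simp [Matrix.transpose_nonsing_inv, hLFFs, hLFCs, hLCFs, hLCCs, Matrix.mul_assoc]
  have hSCds : SCdᵀ = SCd := mp_symm_aux SC SCd hSCs hSCd
  let e : V ≃ {v // v ∉ C} ⊕ {v // v ∈ C} :=
    { toFun := fun v => if h : v ∈ C then Sum.inr (⟨v, h⟩ : {v // v ∈ C})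
          else Sum.inl (⟨v, h⟩ : {v // v ∉ C})
      invFun := Sum.elim Subtype.val Subtype.val
      left_inv := by
        intro v
        by_cases h : v ∈ C <;> simp [h]
      right_inv := by
        rintro (⟨v, h⟩ | ⟨v, h⟩) <;> simp [h] }
  have hLe : L = (fromBlocks LFF LFC LCF LCC).submatrix e e := by
    ext v w
    by_cases hv : v ∈ C <;> by_cases hw : w ∈ C <;>
      simp [e, hv, hw, hLFF, hLFC, hLCF, hLCC]
  have hPe : P = (Matrix.fromBlocks 1 (-(LFF⁻¹ * LFC)) 0 1 *
          Matrix.fromBlocks LFF⁻¹ 0 0 SCd *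
            Matrix.fromBlocks 1 0 (-(LCF * LFF⁻¹)) 1).submatrix e e := hP
  have hLPL : L * P * L = L := by
    have := block_aux LFF LFC LCF LCC SC SCd hU hSC hSCd.1
    rw [hLe, hPe, Matrix.submatrix_mul_equiv, Matrix.submatrix_mul_equiv, this]
  refine ⟨?_, hLPL, ?_⟩
  · rw [hPe, Matrix.transpose_submatrix]
    congr 1
    simp [Matrix.transpose_mul, Matrix.fromBlocks_transpose, Matrix.transpose_nonsing_inv,
      hLFFs, hLFCs, hLCFs, hSCds, Matrix.mul_assoc]
  · obtain ⟨h1, -, h3, -⟩ := hLd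
    have hLL : L * (L * Ld) = L := by
      have := congrArg transpose h1
      rwa [transpose_mul, h3, hLs] at this
    have hrange : ∀ x : V → ℝ, ∑ v, x v = 0 → L *ᵥ (Ld *ᵥ x) = x := by
      intro x hx
      have hz : L *ᵥ (x - L *ᵥ (Ld *ᵥ x)) = 0 := by
        rw [Matrix.mulVec_sub, Matrix.mulVec_mulVec, Matrix.mulVec_mulVec, Matrix.mul_assoc,
          hLL, sub_self]
      have hc := hconn _ hz
      have hs0 : ∑ v, (L *ᵥ (Ld *ᵥ x)) v = 0 := by
        have : (fun _ => (1 : ℝ)) ⬝ᵥ (L *ᵥ (Ld *ᵥ x)) = 0 := by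
          rw [Matrix.dotProduct_mulVec, ← Matrix.mulVec_transpose, hLs, hone, zero_dotProduct]
        simpa [dotProduct] using this
      have hs : ∑ v, (x - L *ᵥ (Ld *ᵥ x)) v = 0 := by
        simp only [Pi.sub_apply, Finset.sum_sub_distrib, hx, hs0, sub_self]
      funext w
      have h5 : ∑ v, (x - L *ᵥ (Ld *ᵥ x)) v = ∑ _v : V, (x - L *ᵥ (Ld *ᵥ x)) w :=
        Finset.sum_congr rfl (fun v _ => hc v w)
      rw [hs, Finset.sum_const, nsmul_eq_mul] at h5
      have : Nonempty V := ⟨s⟩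
      have hcard : ((Finset.univ : Finset V).card : ℝ) ≠ 0 := by
        simp
      have h6 := (mul_eq_zero.1 h5.symm).resolve_left hcard
      simp only [Pi.sub_apply] at h6
      linarith
    intro x y hx hy
    have key : ∀ M : Matrix V V ℝ, L * M * L = L →
        y ⬝ᵥ (M *ᵥ x) = (Ld *ᵥ y) ⬝ᵥ (L *ᵥ (Ld *ᵥ x)) := by
      intro M hM
      have t1 : ∀ w u : V → ℝ, (L *ᵥ w) ⬝ᵥ u = w ⬝ᵥ (L *ᵥ u) := by
        intro w u
        rw [Matrix.dotProduct_mulVec, ← Matrix.mulVec_transpose, hLs]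
      calc y ⬝ᵥ (M *ᵥ x) = (L *ᵥ (Ld *ᵥ y)) ⬝ᵥ (M *ᵥ (L *ᵥ (Ld *ᵥ x))) := by
            rw [hrange x hx, hrange y hy]
        _ = (Ld *ᵥ y) ⬝ᵥ ((L * M * L) *ᵥ (Ld *ᵥ x)) := by
            rw [t1, ← Matrix.mulVec_mulVec, ← Matrix.mulVec_mulVec]
        _ = _ := by rw [hM]
    rw [key Ld h1, key P hLPL]
end

section
/- Suppose G is preconditioned, μ ∈ (0, F*], 1 ≤ k ≤ √m/10, and μ̂ = μ − kμ/√m. Then for every edge e, (1/(10⁶ k⁴)) · r(f(μ̂))_e ≤ r(f(μ))_e ≤ 10⁶ k⁴ · r(f(μ̂))_e. -/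
open Matrix

lemma aux_edge (u x h : ℝ) (hx : |x| < u) (hh : |h| ≤ u) :
    ((u - x)⁻¹ - (u + x)⁻¹) * (h - x) ≤ 1 := by
  obtain ⟨h1, h2⟩ := abs_lt.mp hx
  obtain ⟨h3, h4⟩ := abs_le.mp hh
  have a : 0 < u - x := by linarith
  have b : 0 < u + x := by linarith
  have e : ((u - x)⁻¹ - (u + x)⁻¹) * (h - x) = (2 * x * (h - x)) / ((u - x) * (u + x)) := by
    field_simp
    ring
  rw [e, div_le_one (by positivity)]
  have : x * h ≤ |x| * u := by
    calc x * h ≤ |x * h| := le_abs_self _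
      _ = |x| * |h| := abs_mul _ _
      _ ≤ |x| * u := by gcongr
  nlinarith [sq_nonneg (u - |x|), sq_abs x]

/-- both inverse slacks on an edge of capacity `w` are small -/
lemma aux_inv (w x c d : ℝ) (hx : |x| < w) (hc : |(w - x)⁻¹ - (w + x)⁻¹| ≤ c)
    (hd : w⁻¹ ≤ d) : (w - x)⁻¹ ≤ c + d ∧ (w + x)⁻¹ ≤ c + d := by
  obtain ⟨h1, h2⟩ := abs_lt.mp hx
  obtain ⟨h3, h4⟩ := abs_le.mp hc
  have hw : 0 < w := by linarith
  rcases le_total 0 x with h | h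
  · have : (w + x)⁻¹ ≤ w⁻¹ := inv_anti₀ hw (by linarith)
    constructor <;> linarith [abs_nonneg ((w - x)⁻¹ - (w + x)⁻¹)]
  · have : (w - x)⁻¹ ≤ w⁻¹ := inv_anti₀ hw (by linarith)
    constructor <;> linarith [abs_nonneg ((w - x)⁻¹ - (w + x)⁻¹)]

lemma aux_diff (u x y : ℝ) (hx : |x| < u) (hy : |y| < u) :
    ((u - y)⁻¹ - (u + y)⁻¹) - ((u - x)⁻¹ - (u + x)⁻¹)
      = ((u - x)⁻¹ * (u - y)⁻¹ + (u + x)⁻¹ * (u + y)⁻¹) * (y - x) := by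
  obtain ⟨h1, h2⟩ := abs_lt.mp hx
  obtain ⟨h3, h4⟩ := abs_lt.mp hy
  have a : u - x ≠ 0 := by linarith
  have b : u + x ≠ 0 := by linarith
  have a' : u - y ≠ 0 := by linarith
  have b' : u + y ≠ 0 := by linarith
  field_simp
  ring

lemma aux_ratio (a b K : ℝ) (ha : 0 < a) (hb : 0 < b) (hK : 1 ≤ K)
    (h : a⁻¹ * b⁻¹ * (b - a) ^ 2 ≤ 18 * K) : a ≤ 20 * K * b := by
  have e : a⁻¹ * b⁻¹ * (b - a) ^ 2 = (b - a) ^ 2 / (a * b) := by field_simp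
  rw [e, div_le_iff₀ (by positivity)] at h
  have h2 : a * a ≤ 20 * K * b * a := by nlinarith [mul_pos ha hb, sq_nonneg b]
  exact le_of_mul_le_mul_right h2 ha

lemma aux_sq (a b K : ℝ) (ha : 0 < a) (hb : 0 < b) (hK : 1 ≤ K) (h : a ≤ 20 * K * b) :
    (b ^ 2)⁻¹ ≤ 400 * K ^ 2 * (a ^ 2)⁻¹ := by
  rw [← div_eq_mul_inv, le_div_iff₀ (by positivity), inv_mul_le_iff₀ (by positivity)]
  calc a ^ 2 ≤ (20 * K * b) ^ 2 := by gcongr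
    _ = _ := by ring

lemma aux_resist (u x y K : ℝ) (hx : |x| < u) (hy : |y| < u) (hK : 1 ≤ K)
    (h : ((u - x)⁻¹ * (u - y)⁻¹ + (u + x)⁻¹ * (u + y)⁻¹) * (y - x) ^ 2 ≤ 18 * K) :
    ((u - y) ^ 2)⁻¹ + ((u + y) ^ 2)⁻¹
      ≤ 400 * K ^ 2 * (((u - x) ^ 2)⁻¹ + ((u + x) ^ 2)⁻¹) := by
  obtain ⟨h1, h2⟩ := abs_lt.mp hx
  obtain ⟨h3, h4⟩ := abs_lt.mp hy
  have a : 0 < u - x := by linarith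
  have b : 0 < u + x := by linarith
  have a' : 0 < u - y := by linarith
  have b' : 0 < u + y := by linarith
  have p1 : 0 ≤ (u - x)⁻¹ * (u - y)⁻¹ * (y - x) ^ 2 := by positivity
  have p2 : 0 ≤ (u + x)⁻¹ * (u + y)⁻¹ * (y - x) ^ 2 := by positivity
  have q1 := aux_ratio (u - x) (u - y) K a a' hK (by
    have : (u - y - (u - x)) ^ 2 = (y - x) ^ 2 := by ring
    rw [this]; linarith)
  have q2 := aux_ratio (u + x) (u + y) K b b' hK (by
    have : (u + y - (u + x)) ^ 2 = (y - x) ^ 2 := by ring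
    rw [this]; linarith)
  have s1 := aux_sq _ _ K a a' hK q1
  have s2 := aux_sq _ _ K b b' hK q2
  linarith

lemma aux_pair {V E : Type*} [Fintype V] [Fintype E] [DecidableEq V] (s t : V)
    (B : Matrix E V ℝ) (χst : V → ℝ)
    (hχ : χst = fun v => (if v = t then (1 : ℝ) else 0) - (if v = s then 1 else 0))
    (h : E → ℝ) (c : ℝ) (hh : Bᵀ *ᵥ h = c • χst) (φ : V → ℝ) :
    ∑ e, (B *ᵥ φ) e * h e = c * (φ t - φ s) := by
  have h1 : (B *ᵥ φ) ⬝ᵥ h = φ ⬝ᵥ (Bᵀ *ᵥ h) := by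
    rw [Matrix.mulVec_transpose, dotProduct_comm, Matrix.dotProduct_mulVec, dotProduct_comm]
  have h2 : ∑ e, (B *ᵥ φ) e * h e = (B *ᵥ φ) ⬝ᵥ h := rfl
  rw [h2, h1, hh, hχ, dotProduct_smul]
  simp [dotProduct, mul_sub, Finset.sum_sub_distrib]

lemma aux_psi {V E : Type*} [Fintype V] [Fintype E] [DecidableEq V] (s t : V)
    (u : E → ℝ) (B : Matrix E V ℝ) (χst : V → ℝ)
    (hχ : χst = fun v => (if v = t then (1 : ℝ) else 0) - (if v = s then 1 else 0))
    (Fstar ν : ℝ) (g : E → ℝ) (hg : ∀ e, |g e| ≤ u e) (hgF : Bᵀ *ᵥ g = Fstar • χst)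
    (hν : 0 < ν) (hνF : ν ≤ Fstar) (f : E → ℝ) (hf : ∀ e, |f e| < u e)
    (hfF : Bᵀ *ᵥ f = (Fstar - ν) • χst) (φ : V → ℝ)
    (hφ : ∀ e, (B *ᵥ φ) e = (u e - f e)⁻¹ - (u e + f e)⁻¹) :
    |φ t - φ s| ≤ (Fintype.card E : ℝ) / ν := by
  have key : ∀ (h : E → ℝ) (c : ℝ), (∀ e, |h e| ≤ u e) → Bᵀ *ᵥ h = c • χst →
      (c - (Fstar - ν)) * (φ t - φ s) ≤ Fintype.card E := by
    intro h c hh hc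
    have h1 : Bᵀ *ᵥ (h - f) = (c - (Fstar - ν)) • χst := by
      rw [Matrix.mulVec_sub, hc, hfF, ← sub_smul]
    rw [← aux_pair s t B χst hχ _ _ h1 φ]
    calc ∑ e, (B *ᵥ φ) e * (h - f) e ≤ ∑ e : E, (1 : ℝ) := by
          apply Finset.sum_le_sum
          intro e _
          rw [hφ]
          exact aux_edge _ _ _ (hf e) (hh e)
      _ = _ := by simp
  have k1 := key g Fstar hg hgF
  have k2 := key (-g) (-Fstar) (by simpa using hg) (by rw [Matrix.mulVec_neg, hgF, neg_smul])
  have hm : (0 : ℝ) ≤ Fintype.card E := by positivity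
  rw [le_div_iff₀ hν]
  rcases abs_cases (φ t - φ s) with ⟨h, h'⟩ | ⟨h, h'⟩
  · rw [h]; linarith
  · rw [h]
    nlinarith



/-- Resistances induced by a flow: `r(f)_e = u⁺(f)_e⁻² + u⁻(f)_e⁻²`. -/
noncomputable def resist {E : Type*} (u f : E → ℝ) (e : E) : ℝ :=
  ((u e - f e) ^ 2)⁻¹ + ((u e + f e) ^ 2)⁻¹

/-- KKT characterization of the central path flow with parameter `μ`. -/
def IsCentralFlow {V E : Type*} [Fintype V] [Fintype E]
    (B : Matrix E V ℝ) (u : E → ℝ) (χst : V → ℝ) (Fstar μ : ℝ) (f : E → ℝ) : Prop :=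
  (∀ e, |f e| < u e) ∧ Bᵀ *ᵥ f = (Fstar - μ) • χst ∧
    ∃ φ : V → ℝ, ∀ e, (B *ᵥ φ) e = (u e - f e)⁻¹ - (u e + f e)⁻¹

/-- Preconditioned graph with parameter `U` and preconditioning edges `P`. -/
def Preconditioned {V E : Type*} [Fintype E] (head tail : E → V) (s t : V)
    (u : E → ℝ) (U : ℝ) (P : Finset E) : Prop :=
  0 < U ∧
    (∀ e ∈ P, u e = 2 * U ∧ ((head e = s ∧ tail e = t) ∨ (head e = t ∧ tail e = s))) ∧
    (∀ e ∉ P, u e ≤ U) ∧ Fintype.card E ≤ 2 * P.card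

set_option maxHeartbeats 1000000 in
/-- Lemma `stable`, central path stability: for `μ̂ = μ − kμ/√m` with
`1 ≤ k ≤ √m/10`, the central path resistances satisfy
`(10⁶k⁴)⁻¹ r(f(μ̂))_e ≤ r(f(μ))_e ≤ 10⁶k⁴ r(f(μ̂))_e` for every edge. -/
theorem central_path_resistance_stability {V E : Type*} [Fintype V] [Fintype E] [DecidableEq V]
    [DecidableEq E]
    (head tail : E → V) (s t : V) (hst : s ≠ t)
    (u : E → ℝ) (hu : ∀ e, 0 < u e)
    (B : Matrix E V ℝ)
    (hB : ∀ e v, B e v = (if v = head e then (1 : ℝ) else 0) - (if v = tail e then 1 else 0))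
    (χst : V → ℝ)
    (hχ : χst = fun v => (if v = t then (1 : ℝ) else 0) - (if v = s then 1 else 0))
    (hconn : ∀ x : V → ℝ, (∀ e, x (head e) = x (tail e)) → ∀ v w : V, x v = x w)
    (Fstar : ℝ)
    (hFstar : IsGreatest
      {F : ℝ | ∃ f : E → ℝ, (∀ e, |f e| ≤ u e) ∧ Bᵀ *ᵥ f = F • χst} Fstar)
    (U : ℝ) (P : Finset E) (hpre : Preconditioned head tail s t u U P)
    (μ : ℝ) (hμ0 : 0 < μ) (hμF : μ ≤ Fstar)
    (k : ℝ) (hk1 : 1 ≤ k) (hk2 : k ≤ Real.sqrt (Fintype.card E) / 10)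
    (μhat : ℝ) (hμhat : μhat = μ - k * μ / Real.sqrt (Fintype.card E))
    (fμ : E → ℝ) (hfμ : IsCentralFlow B u χst Fstar μ fμ)
    (fh : E → ℝ) (hfh : IsCentralFlow B u χst Fstar μhat fh) :
    ∀ e : E,
      (1 / (10 ^ 6 * k ^ 4)) * resist u fh e ≤ resist u fμ e ∧
        resist u fμ e ≤ 10 ^ 6 * k ^ 4 * resist u fh e := by

  obtain ⟨hU, hP, hnP, hcard⟩ := hpre
  obtain ⟨⟨g, hg, hgF⟩, -⟩ := hFstar
  obtain ⟨hf, hfF, φ, hφ⟩ := hfμ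
  obtain ⟨hf', hfF', φ', hφ'⟩ := hfh
  set m : ℝ := (Fintype.card E : ℝ) with hm
  have hs10 : 10 ≤ Real.sqrt m := by linarith
  have hspos : 0 < Real.sqrt m := by linarith
  have hm0 : 0 ≤ m := by positivity
  have hss : Real.sqrt m * Real.sqrt m = m := Real.mul_self_sqrt hm0
  have hmpos : 0 < m := by nlinarith
  have hη : k * μ / Real.sqrt m ≤ μ / 10 := by
    rw [div_le_iff₀ hspos]; nlinarith
  have hη0 : 0 < k * μ / Real.sqrt m := by positivity
  set η := k * μ / Real.sqrt m with hηd
  have hη2 : η ^ 2 * m = k ^ 2 * μ ^ 2 := by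
    rw [hηd, div_pow, Real.sq_sqrt hm0]; field_simp
  have hμh : 0 < μhat := by linarith
  have hψ := aux_psi s t u B χst hχ Fstar μ g hg hgF hμ0 hμF fμ hf hfF φ hφ
  have hψ' := aux_psi s t u B χst hχ Fstar μhat g hg hgF hμh (by linarith) fh hf' hfF' φ' hφ'
  rw [← hm] at hψ hψ'
  have hψ2 : |φ' t - φ' s| ≤ (5 / 4) * (m / μ) := by
    refine hψ'.trans ?_
    rw [div_le_iff₀ hμh]
    have : (5 / 4) * (m / μ) * μhat = (5 / 4) * m * (μhat / μ) := by ring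
    rw [this]
    have : 9 / 10 ≤ μhat / μ := by rw [le_div_iff₀ hμ0]; linarith
    nlinarith
  have hBφ : ∀ (x : V → ℝ) e, (B *ᵥ x) e = x (head e) - x (tail e) := by
    intro x e
    simp [Matrix.mulVec, dotProduct, hB, sub_mul, Finset.sum_sub_distrib]
  have hu2 : ∀ e, u e ≤ 2 * U := by
    intro e
    by_cases h : e ∈ P
    · exact (hP e h).1.le
    · linarith [hnP e h]
  have hFm : Fstar ≤ m * (2 * U) := by
    have h1 := aux_pair s t B χst hχ g Fstar hgF (fun v => if v = t then 1 else 0)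
    have h2 : Fstar = ∑ e, (B *ᵥ (fun v => if v = t then (1 : ℝ) else 0)) e * g e := by
      rw [h1]; simp [hst]
    rw [h2]
    calc _ ≤ ∑ e : E, (2 * U) := by
          apply Finset.sum_le_sum
          intro e _
          rw [hBφ]
          obtain ⟨a, b⟩ := abs_le.mp (hg e)
          have := hu2 e
          split_ifs <;> linarith
      _ = _ := by simp [hm]
  have hUi : (2 * U)⁻¹ ≤ m / μ := by
    rw [inv_le_comm₀ (by positivity) (by positivity), inv_div, div_le_iff₀ hmpos]
    linarith
  have hX0 : 0 < m / μ := by positivity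
  set X := m / μ with hX
  set D := (φ' t - φ' s) - (φ t - φ s) with hD
  set q : E → ℝ := fun e =>
    (u e - fμ e)⁻¹ * (u e - fh e)⁻¹ + (u e + fμ e)⁻¹ * (u e + fh e)⁻¹ with hq
  have hq0 : ∀ e, 0 < q e := by
    intro e
    obtain ⟨h1, h2⟩ := abs_lt.mp (hf e)
    obtain ⟨h3, h4⟩ := abs_lt.mp (hf' e)
    have a : 0 < u e - fμ e := by linarith
    have b : 0 < u e + fμ e := by linarith
    have a' : 0 < u e - fh e := by linarith
    have b' : 0 < u e + fh e := by linarith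
    simp only [hq]
    positivity
  have hdiff : ∀ e, (B *ᵥ (φ' - φ)) e = q e * (fh e - fμ e) := by
    intro e
    rw [Matrix.mulVec_sub, Pi.sub_apply, hφ, hφ']
    exact aux_diff _ _ _ (hf e) (hf' e)
  have hsum : ∑ e, q e * (fh e - fμ e) ^ 2 = η * D := by
    have h1 : Bᵀ *ᵥ (fh - fμ) = η • χst := by
      rw [Matrix.mulVec_sub, hfF, hfF', ← sub_smul]
      congr 1
      linarith
    have h2 := aux_pair s t B χst hχ _ _ h1 (φ' - φ)
    have h3 : (φ' - φ) t - (φ' - φ) s = D := by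
      simp only [hD, Pi.sub_apply]; ring
    rw [h3] at h2
    rw [← h2]
    apply Finset.sum_congr rfl
    intro e _
    rw [hdiff, Pi.sub_apply]; ring
  have hPq : ∀ e ∈ P, D ^ 2 ≤ 9 * X ^ 2 * (q e * (fh e - fμ e) ^ 2) := by
    intro e he
    obtain ⟨hue, hor⟩ := hP e he
    have habs : ∀ x : V → ℝ, |(B *ᵥ x) e| = |x t - x s| := by
      intro x
      rw [hBφ]
      rcases hor with ⟨h1, h2⟩ | ⟨h1, h2⟩ <;> rw [h1, h2]
      rw [abs_sub_comm]
    have hui : (u e)⁻¹ ≤ X := by rw [hue]; exact hUi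
    obtain ⟨a1, a2⟩ := aux_inv (u e) (fμ e) X X (hf e) (by rw [← hφ, habs]; exact hψ) hui
    obtain ⟨b1, b2⟩ := aux_inv (u e) (fh e) (5 / 4 * X) X (hf' e)
      (by rw [← hφ', habs]; exact hψ2) hui
    obtain ⟨h1, h2⟩ := abs_lt.mp (hf e)
    obtain ⟨h3, h4⟩ := abs_lt.mp (hf' e)
    have a' : 0 ≤ (u e - fh e)⁻¹ := inv_nonneg.mpr (by linarith)
    have b' : 0 ≤ (u e + fh e)⁻¹ := inv_nonneg.mpr (by linarith)
    have m1 := mul_le_mul a1 b1 a' (by positivity)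
    have m2 := mul_le_mul a2 b2 b' (by positivity)
    have hqe : q e ≤ 9 * X ^ 2 := by
      simp only [hq]
      nlinarith
    have hD2 : D ^ 2 = (q e * (fh e - fμ e)) ^ 2 := by
      rw [← hdiff, ← sq_abs ((B *ᵥ (φ' - φ)) e), habs, sq_abs]
      simp only [hD, Pi.sub_apply]; ring
    rw [hD2]
    calc (q e * (fh e - fμ e)) ^ 2 = q e * (q e * (fh e - fμ e) ^ 2) := by ring
      _ ≤ _ := by
        apply mul_le_mul_of_nonneg_right hqe
        have := (hq0 e).le
        positivity
  have hterm : ∀ e, 0 ≤ q e * (fh e - fμ e) ^ 2 := fun e => by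
    have := (hq0 e).le
    positivity
  have hDbound : η * D ≤ 18 * k ^ 2 := by
    rcases le_or_gt D 0 with h | h
    · have : η * D ≤ 0 := mul_nonpos_of_nonneg_of_nonpos hη0.le h
      nlinarith
    · have h1 : (P.card : ℝ) * D ^ 2 ≤ 9 * X ^ 2 * (η * D) := by
        rw [← hsum, Finset.mul_sum]
        calc (P.card : ℝ) * D ^ 2 = ∑ e ∈ P, D ^ 2 := by simp
          _ ≤ ∑ e ∈ P, 9 * X ^ 2 * (q e * (fh e - fμ e) ^ 2) := Finset.sum_le_sum hPq
          _ ≤ _ := by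
            apply Finset.sum_le_sum_of_subset_of_nonneg (Finset.subset_univ _)
            intro e _ _
            exact mul_nonneg (by positivity) (hterm e)
      have hc : m ≤ 2 * (P.card : ℝ) := by rw [hm]; exact_mod_cast hcard
      have h2 : m * D ≤ 18 * X ^ 2 * η := by
        refine le_of_mul_le_mul_right ?_ h
        have h6 := mul_le_mul_of_nonneg_right hc (sq_nonneg D)
        linarith
      have h3 : η * (m * D) ≤ η * (18 * X ^ 2 * η) := by gcongr
      have h4 : m * (η * (18 * X ^ 2 * η)) = m * (m * (18 * k ^ 2)) := by
        have : X ^ 2 * μ ^ 2 = m ^ 2 := by rw [hX]; field_simp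
        calc m * (η * (18 * X ^ 2 * η)) = 18 * X ^ 2 * (η ^ 2 * m) := by ring
          _ = 18 * (X ^ 2 * μ ^ 2) * k ^ 2 := by rw [hη2]; ring
          _ = _ := by rw [this]; ring
      have h5 := mul_left_cancel₀ hmpos.ne' h4
      refine le_of_mul_le_mul_left ?_ hmpos
      linarith
  intro e
  have he : q e * (fh e - fμ e) ^ 2 ≤ 18 * k ^ 2 := by
    refine le_trans ?_ hDbound
    rw [← hsum]
    exact Finset.single_le_sum (f := fun e => q e * (fh e - fμ e) ^ 2)
      (fun i _ => hterm i) (Finset.mem_univ e)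
  have hk2' : 1 ≤ k ^ 2 := by nlinarith
  have r1 := aux_resist (u e) (fμ e) (fh e) (k ^ 2) (hf e) (hf' e) hk2' he
  have r2 := aux_resist (u e) (fh e) (fμ e) (k ^ 2) (hf' e) (hf e) hk2' (by
    refine le_trans (le_of_eq ?_) he
    simp only [hq]; ring)
  have e1 : ∀ y, 0 ≤ resist u y e := by
    intro y; unfold resist; positivity
  have hk4 : (0 : ℝ) < k ^ 4 := by positivity
  change resist u fh e ≤ 400 * (k ^ 2) ^ 2 * resist u fμ e at r1
  change resist u fμ e ≤ 400 * (k ^ 2) ^ 2 * resist u fh e at r2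
  have hkk : (k ^ 2) ^ 2 = k ^ 4 := by ring
  rw [hkk] at r1 r2
  have n1 := mul_nonneg hk4.le (e1 fμ)
  have n2 := mul_nonneg hk4.le (e1 fh)
  constructor
  · rw [one_div, inv_mul_le_iff₀ (by positivity)]
    nlinarith
  · nlinarith
end

section
/- There is an absolute constant c₀ > 0 such that the following holds. Suppose G is preconditioned, μ ∈ (0, F*], 0 < T ≤ √m/10, μ̂ = (1 − T/√m)μ, and γ ∈ (0, 1). For each edge e, let change(e, γ) be the largest integer τ ≥ 0 for which there exist real numbers μ ≥ μ^{(1)} > μ^{(2)} > ⋯ > μ^{(τ+1)} ≥ μ̂ with r(f(μ^{(i)}))_e^{1/2} · |f(μ^{(i)})_e − f(μ^{(i+1)})_e| ≥ γ for all 1 ≤ i ≤ τ. Then Σ_{e∈E} change(e, γ) ≤ c₀ T² γ⁻². -/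
open Matrix

lemma cpc_log_sq {a b : ℝ} (ha : 0 < a) (hb : 0 < b) :
    (Real.log a - Real.log b) ^ 2 ≤ (a - b) ^ 2 * (a * b)⁻¹ := by
  have h : 1 + (Real.log a - Real.log b) ^ 2 / 2 ≤ Real.cosh (Real.log a - Real.log b) := by
    generalize Real.log a - Real.log b = x
    have h1 := Real.cosh_two_mul (x / 2)
    rw [Real.cosh_sq, show 2 * (x / 2) = x by ring] at h1
    have h2 : (x / 2) ^ 2 ≤ Real.sinh (x / 2) ^ 2 := by
      rw [sq_le_sq]
      rcases le_total 0 (x / 2) with h0 | h0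
      · have := Real.self_le_sinh_iff.2 h0
        rw [abs_of_nonneg h0]
        exact this.trans (le_abs_self _)
      · have := Real.sinh_le_self_iff.2 h0
        rw [abs_of_nonpos h0]
        exact (neg_le_neg this).trans (neg_le_abs _)
    nlinarith
  rw [Real.cosh_eq, ← Real.log_div ha.ne' hb.ne', ← Real.log_inv,
    Real.exp_log (by positivity), Real.exp_log (by positivity), Real.log_div ha.ne' hb.ne'] at h
  have h2 : (a - b) ^ 2 * (a * b)⁻¹ = a / b + (a / b)⁻¹ - 2 := by
    field_simp
    ring
  rw [h2]
  linarith

/-- weight in the divided difference of the barrier gradient -/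
noncomputable def cpcW (u f f' : ℝ) : ℝ := ((u - f) * (u - f'))⁻¹ + ((u + f) * (u + f'))⁻¹

noncomputable def cpcG (u f : ℝ) : ℝ := (u - f)⁻¹ - (u + f)⁻¹

noncomputable def cpcH (u f : ℝ) : ℝ := Real.log (u + f) - Real.log (u - f)

lemma cpc_dg {u f f' : ℝ} (h : |f| < u) (h' : |f'| < u) :
    cpcG u f - cpcG u f' = (f - f') * cpcW u f f' := by
  rw [abs_lt] at h h'
  have h1 : u - f ≠ 0 := by linarith
  have h2 : u + f ≠ 0 := by linarith
  have h3 : u - f' ≠ 0 := by linarith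
  have h4 : u + f' ≠ 0 := by linarith
  unfold cpcG cpcW
  field_simp
  ring

lemma cpc_W_pos {u f f' : ℝ} (h : |f| < u) (h' : |f'| < u) : 0 < cpcW u f f' := by
  rw [abs_lt] at h h'
  have h1 : 0 < u - f := by linarith
  have h2 : 0 < u + f := by linarith
  have h3 : 0 < u - f' := by linarith
  have h4 : 0 < u + f' := by linarith
  unfold cpcW
  positivity

lemma cpc_H_up {u f f' : ℝ} (h : |f| < u) (h' : |f'| < u) :
    (cpcH u f - cpcH u f') ^ 2 ≤ 2 * ((cpcG u f - cpcG u f') * (f - f')) := by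
  rw [cpc_dg h h']
  rw [abs_lt] at h h'
  have h1 : 0 < u - f := by linarith
  have h2 : 0 < u + f := by linarith
  have h3 : 0 < u - f' := by linarith
  have h4 : 0 < u + f' := by linarith
  have e1 := cpc_log_sq h1 h3
  have e2 := cpc_log_sq h2 h4
  have e3 : (u - f - (u - f')) ^ 2 = (f - f') ^ 2 := by ring
  have e4 : (u + f - (u + f')) ^ 2 = (f - f') ^ 2 := by ring
  rw [e3] at e1
  rw [e4] at e2
  unfold cpcH cpcW
  nlinarith [sq_nonneg (Real.log (u - f) - Real.log (u - f') +
    (Real.log (u + f) - Real.log (u + f')))]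

lemma cpc_log_low {a b γ : ℝ} (ha : 0 < a) (hb : 0 < b) (hγ : 0 < γ) (hγ1 : γ < 1)
    (h : γ ^ 2 * a ^ 2 ≤ 2 * (a - b) ^ 2) : γ ^ 2 ≤ 8 * (Real.log a - Real.log b) ^ 2 := by
  rw [← Real.log_div ha.ne' hb.ne']
  rcases le_total a b with hab | hab
  · -- b ≥ a : log (b/a) ≥ 1 - a/b
    have h1 := Real.one_sub_inv_le_log_of_pos (x := b / a) (by positivity)
    have h2 : Real.log (b / a) = - Real.log (a / b) := by
      rw [← Real.log_inv, inv_div]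
    rw [h2, inv_div] at h1
    have h4 : γ * b ≤ √8 * (b - a) := by
      have hs : √8 * √8 = 8 := Real.mul_self_sqrt (by norm_num)
      have hs0 : 2 ≤ √8 := Real.le_sqrt_of_sq_le (by norm_num)
      have h5 : γ * a ≤ √8 / 2 * (b - a) := by
        apply abs_le_of_sq_le_sq' _ (by nlinarith) |>.2
        nlinarith
      nlinarith
    have h6 : γ ≤ √8 * (1 - a / b) := by
      have : √8 * (1 - a / b) = √8 * (b - a) / b := by field_simp
      rw [this, le_div_iff₀ hb]
      exact h4
    have h7 : γ ≤ √8 * (- Real.log (a / b)) :=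
      h6.trans (mul_le_mul_of_nonneg_left h1 (Real.sqrt_nonneg _))
    have h8 : γ ^ 2 ≤ (√8 * (- Real.log (a / b))) ^ 2 := by gcongr
    rw [mul_pow, Real.sq_sqrt (by norm_num)] at h8
    nlinarith
  · have h1 := Real.one_sub_inv_le_log_of_pos (x := a / b) (by positivity)
    rw [inv_div] at h1
    have h3 : 1 - b / a = (a - b) / a := by field_simp
    have h4 : (0:ℝ) ≤ (a - b) / a := div_nonneg (by linarith) ha.le
    rw [h3] at h1
    have h5 : γ ^ 2 ≤ 2 * ((a - b) / a) ^ 2 := by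
      rw [div_pow, ← mul_div_assoc, le_div_iff₀ (by positivity)]
      exact h
    have h6 : ((a - b) / a) ^ 2 ≤ (Real.log (a / b)) ^ 2 := by gcongr
    nlinarith [sq_nonneg (Real.log (a / b))]

lemma cpc_H_low {u f f' γ : ℝ} (h : |f| < u) (h' : |f'| < u) (hγ : 0 < γ) (hγ1 : γ < 1)
    (hc : γ ≤ √(((u - f) ^ 2)⁻¹ + ((u + f) ^ 2)⁻¹) * |f - f'|) :
    γ ≤ √8 * |cpcH u f - cpcH u f'| := by
  rw [abs_lt] at h h'
  have h1 : 0 < u - f := by linarith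
  have h2 : 0 < u + f := by linarith
  have h3 : 0 < u - f' := by linarith
  have h4 : 0 < u + f' := by linarith
  have hsq : γ ^ 2 ≤ (((u - f) ^ 2)⁻¹ + ((u + f) ^ 2)⁻¹) * (f - f') ^ 2 := by
    have : γ ^ 2 ≤ (√(((u - f) ^ 2)⁻¹ + ((u + f) ^ 2)⁻¹) * |f - f'|) ^ 2 := by gcongr
    rwa [mul_pow, Real.sq_sqrt (by positivity), sq_abs] at this
  have key : γ ^ 2 ≤ 8 * (Real.log (u - f) - Real.log (u - f')) ^ 2 ∨
      γ ^ 2 ≤ 8 * (Real.log (u + f) - Real.log (u + f')) ^ 2 := by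
    rcases le_total (u - f) (u + f) with hab | hab
    · left
      apply cpc_log_low h1 h3 hγ hγ1
      have : ((u + f) ^ 2)⁻¹ ≤ ((u - f) ^ 2)⁻¹ := by gcongr
      have h5 : γ ^ 2 ≤ 2 * (f - f') ^ 2 / (u - f) ^ 2 := by
        rw [div_eq_mul_inv]
        nlinarith [sq_nonneg (f - f')]
      rw [le_div_iff₀ (by positivity)] at h5
      linarith [show (u - f - (u - f')) ^ 2 = (f - f') ^ 2 by ring]
    · right
      apply cpc_log_low h2 h4 hγ hγ1
      have : ((u - f) ^ 2)⁻¹ ≤ ((u + f) ^ 2)⁻¹ := by gcongr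
      have h5 : γ ^ 2 ≤ 2 * (f - f') ^ 2 / (u + f) ^ 2 := by
        rw [div_eq_mul_inv]
        nlinarith [sq_nonneg (f - f')]
      rw [le_div_iff₀ (by positivity)] at h5
      linarith [show (u + f - (u + f')) ^ 2 = (f - f') ^ 2 by ring]
  have hsign : 0 ≤ - ((Real.log (u - f) - Real.log (u - f')) *
      (Real.log (u + f) - Real.log (u + f'))) := by
    rcases le_total f f' with hf | hf
    · have a1 := Real.log_le_log h3 (show u - f' ≤ u - f by linarith)
      have a2 := Real.log_le_log h2 (show u + f ≤ u + f' by linarith)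
      nlinarith
    · have a1 := Real.log_le_log h1 (show u - f ≤ u - f' by linarith)
      have a2 := Real.log_le_log h4 (show u + f' ≤ u + f by linarith)
      nlinarith
  have hfin : γ ^ 2 ≤ (√8 * |cpcH u f - cpcH u f'|) ^ 2 := by
    rw [mul_pow, Real.sq_sqrt (by norm_num), sq_abs]
    unfold cpcH
    rcases key with k | k <;>
      nlinarith [sq_nonneg (Real.log (u - f) - Real.log (u - f')),
        sq_nonneg (Real.log (u + f) - Real.log (u + f'))]
  exact (abs_le_of_sq_le_sq' hfin (by positivity)).2

lemma cpc_chain {E : Type} [Fintype E] (H : ℝ → EuclideanSpace ℝ E) (K : ℝ) (S : Finset ℝ)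
    (hH : ∀ x ∈ S, ∀ y ∈ S, x ≤ y → ‖H y - H x‖ ≤ K * (y - x)) :
    ∃ A : ℝ → EuclideanSpace ℝ E,
      (∀ x ∈ S, ∀ y ∈ S, x ≤ y → ∀ e, |H y e - H x e| ≤ A y e - A x e) ∧
      (∀ x ∈ S, ∀ y ∈ S, x ≤ y → ‖A y - A x‖ ≤ K * (y - x)) := by
  classical
  induction S using Finset.induction_on_max with
  | empty => exact ⟨fun _ => 0, by simp, by simp⟩
  | insert z S hz ih =>
    obtain ⟨A, hA1, hA2⟩ := ih (fun x hx y hy => hH x (Finset.mem_insert_of_mem hx) y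
      (Finset.mem_insert_of_mem hy))
    rcases S.eq_empty_or_nonempty with rfl | hne
    · refine ⟨fun _ => 0, ?_, ?_⟩ <;> simp
    set w := S.max' hne with hw
    have hwS : w ∈ S := S.max'_mem hne
    have hwz := hz w hwS
    set d : EuclideanSpace ℝ E := WithLp.toLp 2 (fun e => |H z e - H w e|) with hd
    have hdn : ‖d‖ ≤ K * (z - w) := by
      have : ‖d‖ = ‖H z - H w‖ := by
        simp [EuclideanSpace.norm_eq, hd]
      rw [this]
      exact hH w (Finset.mem_insert_of_mem hwS) z (Finset.mem_insert_self _ _) hwz.le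
    have hxz : ∀ x ∈ S, Function.update A z (A w + d) x = A x := fun x hx =>
      Function.update_of_ne (hz x hx).ne _ _
    refine ⟨Function.update A z (A w + d), ?_, ?_⟩
    · intro x hx y hy hxy e
      rcases Finset.mem_insert.1 hx with rfl | hx' <;> rcases Finset.mem_insert.1 hy with rfl | hy'
      · simp
      · exact absurd (hz y hy') (not_lt.2 hxy)
      · rw [hxz x hx', Function.update_self]
        have := hA1 x hx' w hwS (S.le_max' x hx') e
        have h2 : |H y e - H x e| ≤ |H y e - H w e| + |H w e - H x e| := abs_sub_le _ _ _
        simp only [PiLp.add_apply, hd]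
        linarith
      · rw [hxz x hx', hxz y hy']
        exact hA1 x hx' y hy' hxy e
    · intro x hx y hy hxy
      rcases Finset.mem_insert.1 hx with rfl | hx' <;> rcases Finset.mem_insert.1 hy with rfl | hy'
      · simp
      · exact absurd (hz y hy') (not_lt.2 hxy)
      · rw [hxz x hx', Function.update_self]
        have := hA2 x hx' w hwS (S.le_max' x hx')
        have h2 : A w + d - A x = (A w - A x) + d := by abel
        rw [h2]
        have := norm_add_le (A w - A x) d
        linarith
      · rw [hxz x hx', hxz y hy']
        exact hA2 x hx' y hy' hxy

lemma cpc_adj {V E : Type} [Fintype V] [Fintype E] (B : Matrix E V ℝ) (φ : V → ℝ) (x : E → ℝ) :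
    ∑ e, (B *ᵥ φ) e * x e = ∑ v, φ v * (Bᵀ *ᵥ x) v := by
  have h1 : ∑ e, (B *ᵥ φ) e * x e = x ⬝ᵥ (B *ᵥ φ) := by
    simp [dotProduct, mul_comm]
  rw [h1, Matrix.dotProduct_mulVec, ← Matrix.mulVec_transpose, dotProduct_comm]
  rfl

lemma cpc_G_le {u f x : ℝ} (h : |f| < u) (hx : |x| ≤ u) : cpcG u f * (x - f) ≤ 2 := by
  rw [abs_lt] at h
  rw [abs_le] at hx
  have h1 : 0 < u - f := by linarith
  have h2 : 0 < u + f := by linarith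
  have e1 : (u - f)⁻¹ * (x - f) ≤ 1 := by
    rw [inv_mul_le_iff₀ h1]; linarith
  have e2 : (u + f)⁻¹ * (f - x) ≤ 1 := by
    rw [inv_mul_le_iff₀ h2]; linarith
  unfold cpcG
  linarith [show ((u - f)⁻¹ - (u + f)⁻¹) * (x - f) =
    (u - f)⁻¹ * (x - f) + (u + f)⁻¹ * (f - x) by ring]

/-- inverse residual bounds on a preconditioning edge -/
lemma cpc_res {U f Q R : ℝ} (hU : 0 < U) (h : |f| < 2 * U) (hG : |cpcG (2 * U) f| ≤ Q)
    (hR : (2 * U)⁻¹ ≤ R) : (2 * U - f)⁻¹ ≤ Q + R ∧ (2 * U + f)⁻¹ ≤ Q + R := by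
  rw [abs_lt] at h
  have h1 : 0 < 2 * U - f := by linarith
  have h2 : 0 < 2 * U + f := by linarith
  unfold cpcG at hG
  have hQ := (abs_nonneg _).trans hG
  rw [abs_le] at hG
  rcases le_total 0 f with hf | hf
  · have : (2 * U + f)⁻¹ ≤ (2 * U)⁻¹ := inv_anti₀ (by linarith) (by linarith)
    constructor <;> linarith
  · have : (2 * U - f)⁻¹ ≤ (2 * U)⁻¹ := inv_anti₀ (by linarith) (by linarith)
    constructor <;> linarith

lemma cpc_energy {V E : Type} [Fintype V] [Fintype E] [DecidableEq V] [DecidableEq E]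
    (head tail : E → V) (s t : V) (u : E → ℝ) (B : Matrix E V ℝ)
    (hB : ∀ e v, B e v = (if v = head e then (1 : ℝ) else 0) - (if v = tail e then 1 else 0))
    (χst : V → ℝ)
    (hχ : χst = fun v => (if v = t then (1 : ℝ) else 0) - (if v = s then 1 else 0))
    (hst : s ≠ t) (Fstar : ℝ)
    (hF : IsGreatest {F : ℝ | ∃ f : E → ℝ, (∀ e, |f e| ≤ u e) ∧ Bᵀ *ᵥ f = F • χst} Fstar)
    (U : ℝ) (P : Finset E) (hP : Preconditioned head tail s t u U P)
    (hm : 0 < (Fintype.card E : ℝ))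
    (β ν ν' : ℝ) (hβ : 0 < β) (hν : β ≤ ν) (hν' : β ≤ ν') (hνF : ν ≤ Fstar) (hνF' : ν' ≤ Fstar)
    (f f' : E → ℝ) (hf : IsCentralFlow B u χst Fstar ν f)
    (hf' : IsCentralFlow B u χst Fstar ν' f') :
    ∑ e, (cpcG (u e) (f e) - cpcG (u e) (f' e)) * (f e - f' e) ≤
      36 * Fintype.card E / β ^ 2 * (ν - ν') ^ 2 := by
  obtain ⟨hU, hPe, hPn, hcard⟩ := hP
  set m : ℝ := (Fintype.card E : ℝ) with hmdef
  obtain ⟨⟨fs, hfs, hfsB⟩, -⟩ := hF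
  have hBφ : ∀ (φ : V → ℝ) e, (B *ᵥ φ) e = φ (head e) - φ (tail e) := by
    intro φ e
    simp [Matrix.mulVec, dotProduct, hB, sub_mul, Finset.sum_sub_distrib]
  have hχφ : ∀ φ : V → ℝ, ∑ v, φ v * χst v = φ t - φ s := by
    intro φ
    simp [hχ, mul_sub, Finset.sum_sub_distrib]
  have huU : ∀ e, u e ≤ 2 * U := by
    intro e
    by_cases he : e ∈ P
    · exact (hPe e he).1.le
    · linarith [hPn e he]
  -- Fstar ≤ 2 U m
  have hFU : Fstar ≤ 2 * U * m := by
    have h1 := congrFun hfsB t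
    have h2 : (Fstar • χst) t = Fstar := by
      simp [hχ, hst.symm]
    rw [h2] at h1
    rw [← h1]
    calc (Bᵀ *ᵥ fs) t = ∑ e, B e t * fs e := by simp [Matrix.mulVec, dotProduct]
      _ ≤ ∑ _e : E, 2 * U := by
        apply Finset.sum_le_sum
        intro e _
        refine le_trans ?_ (huU e)
        have := abs_le.1 (hfs e)
        rw [hB]
        split_ifs <;> linarith
      _ = 2 * U * m := by simp [hmdef, mul_comm]
  have hRβ : (2 * U)⁻¹ ≤ m / β := by
    rw [inv_le_comm₀ (by positivity) (by positivity), inv_div, div_le_iff₀ hm]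
    linarith
  -- bound on potentials
  have hpot : ∀ ν f (φ : V → ℝ), β ≤ ν → ν ≤ Fstar → (∀ e, |f e| < u e) →
      Bᵀ *ᵥ f = (Fstar - ν) • χst →
      (∀ e, (B *ᵥ φ) e = (u e - f e)⁻¹ - (u e + f e)⁻¹) → |φ t - φ s| ≤ 2 * m / β := by
    intro ν f φ hν hνF hfu hfB hφ
    have hgen : ∀ (x : E → ℝ) (c : ℝ), (∀ e, |x e| ≤ u e) → Bᵀ *ᵥ x = c • χst →
        (c - (Fstar - ν)) * (φ t - φ s) ≤ 2 * m := by
      intro x c hx hxB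
      have h1 := cpc_adj B φ (fun e => x e - f e)
      have h2 : Bᵀ *ᵥ (fun e => x e - f e) = (c - (Fstar - ν)) • χst := by
        have : (fun e => x e - f e) = x - f := rfl
        rw [this, Matrix.mulVec_sub, hxB, hfB, ← sub_smul]
      rw [h2] at h1
      have h3 : ∑ v, φ v * ((c - (Fstar - ν)) • χst) v = (c - (Fstar - ν)) * (φ t - φ s) := by
        rw [← hχφ, Finset.mul_sum]
        apply Finset.sum_congr rfl
        intro v _
        simp only [Pi.smul_apply, smul_eq_mul]
        ring
      rw [← h3, ← h1]
      calc ∑ e, (B *ᵥ φ) e * (x e - f e) ≤ ∑ _e : E, (2 : ℝ) := by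
            apply Finset.sum_le_sum
            intro e _
            rw [hφ]
            exact cpc_G_le (hfu e) (hx e)
        _ = 2 * m := by simp [hmdef, mul_comm]
    have a1 := hgen fs Fstar hfs hfsB
    have a2 := hgen (-fs) (-Fstar) (by simpa using hfs)
      (by rw [Matrix.mulVec_neg, hfsB, neg_smul])
    rw [le_div_iff₀ hβ]
    rcases abs_cases (φ t - φ s) with ⟨h, h0⟩ | ⟨h, h0⟩ <;> rw [h] <;> nlinarith
  obtain ⟨hfu, hfB, φ, hφ⟩ := hf
  obtain ⟨hfu', hfB', φ', hφ'⟩ := hf'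
  have p1 := hpot ν f φ hν hνF hfu hfB hφ
  have p2 := hpot ν' f' φ' hν' hνF' hfu' hfB' hφ'
  set D := ∑ e, (cpcG (u e) (f e) - cpcG (u e) (f' e)) * (f e - f' e) with hD
  set Δ := (φ t - φ s) - (φ' t - φ' s) with hΔ
  have hDeq : D = (ν' - ν) * Δ := by
    have h1 := cpc_adj B (φ - φ') (f - f')
    rw [Matrix.mulVec_sub, Matrix.mulVec_sub, hfB, hfB', ← sub_smul] at h1
    have h3 : ∑ v, (φ - φ') v * ((Fstar - ν - (Fstar - ν')) • χst) v = (ν' - ν) * Δ := by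
      have := hχφ (φ - φ')
      simp only [Pi.sub_apply] at this
      rw [hΔ, show φ t - φ s - (φ' t - φ' s) = φ t - φ' t - (φ s - φ' s) by ring, ← this,
        Finset.mul_sum]
      apply Finset.sum_congr rfl
      intro v _
      simp only [Pi.smul_apply, Pi.sub_apply, smul_eq_mul]
      ring
    rw [← h3, ← h1]
    apply Finset.sum_congr rfl
    intro e _
    simp only [Pi.sub_apply, hφ, hφ']
    rfl
  have hterm : ∀ e, 0 ≤ (cpcG (u e) (f e) - cpcG (u e) (f' e)) * (f e - f' e) := by
    intro e
    rw [cpc_dg (hfu e) (hfu' e)]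
    have := cpc_W_pos (hfu e) (hfu' e)
    nlinarith [mul_nonneg this.le (sq_nonneg (f e - f' e))]
  set W := 18 * (m / β) ^ 2 with hW
  have hPterm : ∀ e ∈ P, Δ ^ 2 ≤ W * ((cpcG (u e) (f e) - cpcG (u e) (f' e)) * (f e - f' e)) := by
    intro e he
    obtain ⟨hue, hht⟩ := hPe e he
    have hG : cpcG (u e) (f e) = φ (head e) - φ (tail e) := by
      rw [← hBφ, hφ]; rfl
    have hG' : cpcG (u e) (f' e) = φ' (head e) - φ' (tail e) := by
      rw [← hBφ, hφ']; rfl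
    have hGa : |cpcG (u e) (f e)| ≤ 2 * m / β := by
      rw [hG]
      rcases hht with ⟨h1, h2⟩ | ⟨h1, h2⟩ <;> rw [h1, h2]
      · rwa [abs_sub_comm]
      · exact p1
    have hGa' : |cpcG (u e) (f' e)| ≤ 2 * m / β := by
      rw [hG']
      rcases hht with ⟨h1, h2⟩ | ⟨h1, h2⟩ <;> rw [h1, h2]
      · rwa [abs_sub_comm]
      · exact p2
    have hsq : Δ ^ 2 = (cpcG (u e) (f e) - cpcG (u e) (f' e)) ^ 2 := by
      rw [hG, hG', hΔ]
      rcases hht with ⟨h1, h2⟩ | ⟨h1, h2⟩ <;> rw [h1, h2] <;> ring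
    have b := hfu e
    have b' := hfu' e
    have hw : cpcW (u e) (f e) (f' e) ≤ W := by
      rw [hue] at hGa hGa' b b' ⊢
      obtain ⟨r1, r2⟩ := cpc_res hU b hGa hRβ
      obtain ⟨r3, r4⟩ := cpc_res hU b' hGa' hRβ
      have hQ : 2 * m / β + m / β = 3 * (m / β) := by ring
      rw [hQ] at r1 r2 r3 r4
      rw [abs_lt] at b b'
      have q1 : 0 ≤ (2 * U - f e)⁻¹ := inv_nonneg.2 (by linarith)
      have q2 : 0 ≤ (2 * U + f e)⁻¹ := inv_nonneg.2 (by linarith)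
      have q3 : 0 ≤ (2 * U - f' e)⁻¹ := inv_nonneg.2 (by linarith)
      have q4 : 0 ≤ (2 * U + f' e)⁻¹ := inv_nonneg.2 (by linarith)
      unfold cpcW
      rw [mul_inv, mul_inv]
      have s1 := mul_le_mul r1 r3 q3 (by positivity)
      have s2 := mul_le_mul r2 r4 q4 (by positivity)
      rw [hW]
      nlinarith
    have hfe := hterm e
    rw [hsq]
    rw [cpc_dg (hfu e) (hfu' e)] at hfe ⊢
    calc ((f e - f' e) * cpcW (u e) (f e) (f' e)) ^ 2
        = cpcW (u e) (f e) (f' e) *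
          ((f e - f' e) * cpcW (u e) (f e) (f' e) * (f e - f' e)) := by ring
      _ ≤ _ := mul_le_mul_of_nonneg_right hw hfe
  have hsumP : (P.card : ℝ) * Δ ^ 2 ≤ W * D := by
    calc (P.card : ℝ) * Δ ^ 2 = ∑ _e ∈ P, Δ ^ 2 := by simp
      _ ≤ ∑ e ∈ P, W * ((cpcG (u e) (f e) - cpcG (u e) (f' e)) * (f e - f' e)) :=
        Finset.sum_le_sum hPterm
      _ = W * ∑ e ∈ P, (cpcG (u e) (f e) - cpcG (u e) (f' e)) * (f e - f' e) := by
        rw [Finset.mul_sum]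
      _ ≤ W * D := by
        apply mul_le_mul_of_nonneg_left _ (by positivity)
        exact Finset.sum_le_sum_of_subset_of_nonneg (Finset.subset_univ _) (fun e _ _ => hterm e)
  have hcard' : m ≤ 2 * P.card := by
    rw [hmdef]; exact_mod_cast hcard
  have hWpos : 0 ≤ W := by positivity
  -- m Δ² ≤ 2 W D, D = δ Δ
  have hmain : m * Δ ^ 2 ≤ 2 * W * D := by nlinarith [sq_nonneg Δ]
  have hD0 : 0 ≤ D := Finset.sum_nonneg (fun e _ => hterm e)
  have hgoal : m * D ≤ 2 * W * (ν - ν') ^ 2 := by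
    rcases hD0.eq_or_lt with h0 | h0
    · rw [← h0, mul_zero]; positivity
    · have : m * D * D ≤ 2 * W * (ν - ν') ^ 2 * D := by
        calc m * D * D = (ν - ν') ^ 2 * (m * Δ ^ 2) := by rw [hDeq]; ring
          _ ≤ (ν - ν') ^ 2 * (2 * W * D) := mul_le_mul_of_nonneg_left hmain (sq_nonneg _)
          _ = _ := by ring
      exact le_of_mul_le_mul_right this h0
  have hfin : 36 * m / β ^ 2 * (ν - ν') ^ 2 = (2 * W * (ν - ν') ^ 2) / m := by
    rw [hW]; field_simp; ring
  rw [hfin, le_div_iff₀ hm]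
  linarith

/-- Lemma `l2change`: there is an absolute constant `c₀ > 0` such that
on a preconditioned graph, for `μ̂ = (1 − T/√m)μ` with `0 < T ≤ √m/10` and `γ ∈ (0,1)`,
any family of counts `τ e` witnessed by decreasing subdivisions `μ ≥ μ⁽¹⁾ > ⋯ > μ^{(τ+1)} ≥ μ̂`
along which `r(f(μ⁽ⁱ⁾))_e^{1/2}|f(μ⁽ⁱ⁾)_e − f(μ⁽ⁱ⁺¹⁾)_e| ≥ γ` satisfies
`Σ_e τ e ≤ c₀ T² γ⁻²`. -/
theorem central_path_change_count :
    ∃ c₀ : ℝ, 0 < c₀ ∧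
      ∀ (V E : Type) [Fintype V] [Fintype E] [DecidableEq V] [DecidableEq E]
        (head tail : E → V) (s t : V), s ≠ t →
        ∀ u : E → ℝ, (∀ e, 0 < u e) →
        ∀ B : Matrix E V ℝ,
          (∀ e v, B e v =
            (if v = head e then (1 : ℝ) else 0) - (if v = tail e then 1 else 0)) →
        ∀ χst : V → ℝ,
          (χst = fun v => (if v = t then (1 : ℝ) else 0) - (if v = s then 1 else 0)) →
        (∀ x : V → ℝ, (∀ e, x (head e) = x (tail e)) → ∀ v w, x v = x w) →
        ∀ Fstar : ℝ,
          IsGreatest {F : ℝ | ∃ f : E → ℝ, (∀ e, |f e| ≤ u e) ∧ Bᵀ *ᵥ f = F • χst} Fstar →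
        ∀ (U : ℝ) (P : Finset E), Preconditioned head tail s t u U P →
        ∀ μ : ℝ, 0 < μ → μ ≤ Fstar →
        ∀ T : ℝ, 0 < T → T ≤ Real.sqrt (Fintype.card E) / 10 →
        ∀ μhat : ℝ, μhat = (1 - T / Real.sqrt (Fintype.card E)) * μ →
        ∀ γ : ℝ, 0 < γ → γ < 1 →
        ∀ fc : ℝ → E → ℝ,
          (∀ ν : ℝ, μhat ≤ ν → ν ≤ μ → IsCentralFlow B u χst Fstar ν (fc ν)) →
        ∀ τ : E → ℕ,
          (∀ e : E, ∃ ms : Fin (τ e + 1) → ℝ, StrictAnti ms ∧ ms 0 ≤ μ ∧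
            μhat ≤ ms (Fin.last (τ e)) ∧
            ∀ i : Fin (τ e),
              γ ≤ Real.sqrt (resist u (fc (ms i.castSucc)) e) *
                |fc (ms i.castSucc) e - fc (ms i.succ) e|) →
          (∑ e, (τ e : ℝ)) ≤ c₀ * T ^ 2 / γ ^ 2 := by
  classical
  refine ⟨1000, by norm_num, ?_⟩
  intro V E _ _ _ _ head tail s t hst u hu B hB χst hχ _ Fstar hF U P hP μ hμ hμF T hT hTm μhat
    hμhat γ hγ hγ1 fc hfc τ hτ
  set m : ℝ := (Fintype.card E : ℝ) with hm_def
  have hsm : 0 < √m := by linarith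
  have hm : 0 < m := Real.sqrt_pos.1 hsm
  have hTs : T / √m ≤ 1 / 10 := by
    rw [div_le_iff₀ hsm]; linarith
  have hTs0 : 0 < T / √m := by positivity
  set β := 9 / 10 * μ with hβ_def
  have hβ : 0 < β := by positivity
  have hβμ : β ≤ μhat := by rw [hμhat]; nlinarith
  have hhat : μhat ≤ μ := by rw [hμhat]; nlinarith
  set K := √(72 * m / β ^ 2) with hK
  set H : ℝ → EuclideanSpace ℝ E := fun ν => WithLp.toLp 2 (fun e => cpcH (u e) (fc ν e)) with hH
  have hHL : ∀ x y, μhat ≤ x → x ≤ y → y ≤ μ → ‖H y - H x‖ ≤ K * (y - x) := by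
    intro x y hx hxy hy
    have hcx := hfc x hx (hxy.trans hy)
    have hcy := hfc y (hx.trans hxy) hy
    have hen := cpc_energy head tail s t u B hB χst hχ hst Fstar hF U P hP hm β y x hβ
      (by linarith) (by linarith) (by linarith) (by linarith) _ _ hcy hcx
    rw [EuclideanSpace.norm_eq]
    apply Real.sqrt_le_iff.2
    refine ⟨mul_nonneg (Real.sqrt_nonneg _) (by linarith), ?_⟩
    rw [mul_pow, hK, Real.sq_sqrt (by positivity)]
    calc ∑ e, ‖(H y - H x) e‖ ^ 2
        ≤ ∑ e, 2 * ((cpcG (u e) (fc y e) - cpcG (u e) (fc x e)) * (fc y e - fc x e)) := by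
          apply Finset.sum_le_sum
          intro e _
          simp only [hH, PiLp.sub_apply, Real.norm_eq_abs, sq_abs]
          exact cpc_H_up (hcy.1 e) (hcx.1 e)
      _ = 2 * ∑ e, (cpcG (u e) (fc y e) - cpcG (u e) (fc x e)) * (fc y e - fc x e) := by
          rw [Finset.mul_sum]
      _ ≤ 2 * (36 * m / β ^ 2 * (y - x) ^ 2) := by linarith
      _ = _ := by ring
  choose ms hanti hms0 hmsl hchg using hτ
  have hrange : ∀ e i, μhat ≤ ms e i ∧ ms e i ≤ μ := fun e i =>
    ⟨(hmsl e).trans ((hanti e).antitone (Fin.le_last i)),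
      ((hanti e).antitone (Fin.zero_le i)).trans (hms0 e)⟩
  set S : Finset ℝ := insert μ (insert μhat
    (Finset.univ.biUnion fun e => Finset.univ.image (ms e))) with hS
  have hSr : ∀ x ∈ S, μhat ≤ x ∧ x ≤ μ := by
    intro x hx
    simp only [hS, Finset.mem_insert, Finset.mem_biUnion, Finset.mem_image, Finset.mem_univ,
      true_and] at hx
    rcases hx with rfl | rfl | ⟨e, i, rfl⟩
    · exact ⟨hhat, le_rfl⟩
    · exact ⟨le_rfl, hhat⟩
    · exact hrange e i
  have hSm : ∀ e i, ms e i ∈ S := by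
    intro e i
    simp only [hS, Finset.mem_insert, Finset.mem_biUnion, Finset.mem_image, Finset.mem_univ,
      true_and]
    exact Or.inr (Or.inr ⟨e, i, rfl⟩)
  have hSμ : μ ∈ S := by simp [hS]
  have hSh : μhat ∈ S := by simp [hS]
  obtain ⟨A, hA1, hA2⟩ := cpc_chain H K S
    (fun x hx y hy hxy => hHL x y (hSr x hx).1 hxy (hSr y hy).2)
  have hmono : ∀ x ∈ S, ∀ y ∈ S, x ≤ y → ∀ e, A x e ≤ A y e := fun x hx y hy hxy e => by
    have := (abs_nonneg _).trans (hA1 x hx y hy hxy e)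
    linarith
  have h8 : 0 < √(8:ℝ) := Real.sqrt_pos.2 (by norm_num)
  have hcount : ∀ e, (τ e : ℝ) * γ ≤ √8 * (A μ e - A μhat e) := by
    intro e
    have hind : ∀ i : Fin (τ e + 1), ((i : ℕ) : ℝ) * γ ≤ √8 * (A (ms e 0) e - A (ms e i) e) := by
      intro i
      induction i using Fin.induction with
      | zero => simp
      | succ i ih =>
        have hle : ms e i.succ ≤ ms e i.castSucc := (hanti e).antitone (Fin.castSucc_lt_succ).le
        have h1 := hA1 _ (hSm e i.succ) _ (hSm e i.castSucc) hle e
        have r1 := hrange e i.castSucc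
        have r2 := hrange e i.succ
        have h2 := cpc_H_low ((hfc _ r1.1 r1.2).1 e) ((hfc _ r2.1 r2.2).1 e) hγ hγ1 (hchg e i)
        have h3 := mul_le_mul_of_nonneg_left h1 h8.le
        simp only [hH] at h3
        simp only [Fin.val_castSucc] at ih
        rw [Fin.val_succ]
        push_cast
        linarith
    have h1 := hind (Fin.last _)
    rw [Fin.val_last] at h1
    have h2 := hmono _ (hSm e 0) _ hSμ (hrange e 0).2 e
    have h3 := hmono _ hSh _ (hSm e (Fin.last _)) (hrange e _).1 e
    refine h1.trans (mul_le_mul_of_nonneg_left (by linarith) h8.le)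
  have hnorm := hA2 _ hSh _ hSμ hhat
  have hsq : ∑ e, (A μ e - A μhat e) ^ 2 ≤ K ^ 2 * (μ - μhat) ^ 2 := by
    have h1 : ‖A μ - A μhat‖ ^ 2 ≤ (K * (μ - μhat)) ^ 2 := by gcongr
    rw [EuclideanSpace.norm_sq_eq, mul_pow] at h1
    simpa [Real.norm_eq_abs, sq_abs] using h1
  have hKT : K ^ 2 * (μ - μhat) ^ 2 = 800 / 9 * T ^ 2 := by
    have hs : √m ^ 2 = m := Real.sq_sqrt hm.le
    rw [hK, Real.sq_sqrt (by positivity), hμhat, hβ_def,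
      show μ - (1 - T / √m) * μ = T / √m * μ by ring, mul_pow (T / √m), div_pow T, hs]
    field_simp
    norm_num
  rw [le_div_iff₀ (by positivity), Finset.sum_mul]
  calc ∑ e, (τ e : ℝ) * γ ^ 2 ≤ ∑ e, 8 * (A μ e - A μhat e) ^ 2 := by
        apply Finset.sum_le_sum
        intro e _
        have h1 : ((τ e : ℝ) * γ) ^ 2 ≤ (√8 * (A μ e - A μhat e)) ^ 2 := by
          have := hcount e
          gcongr
        rw [mul_pow, mul_pow, Real.sq_sqrt (by norm_num)] at h1
        have h2 : (τ e : ℝ) ≤ (τ e : ℝ) ^ 2 := by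
          exact_mod_cast Nat.le_self_pow (by norm_num) _
        nlinarith [sq_nonneg γ]
    _ = 8 * ∑ e, (A μ e - A μhat e) ^ 2 := by rw [Finset.mul_sum]
    _ ≤ 1000 * T ^ 2 := by nlinarith [sq_nonneg T]
end

section
/- There exists an absolute constant c ∈ (0, 1) such that the following holds. Suppose G is preconditioned, μ ∈ (0, F*], k ≥ 1 with k ≤ √m/10, and set ε_step = ε_solve = c k⁻³ and μ^{(i)} := μ − (i ε_step/√m) μ for integers i ≥ 0 (assume μ^{(i)} > 0 for all i considered). Set f^{(0)} := f(μ). Suppose that for each integer 0 ≤ i < k/ε_step we are given a vector r̃^{(i)} ∈ ℝ^E with e^{−ε_solve} r(f^{(i)})_e ≤ r̃^{(i)}_e ≤ e^{ε_solve} r(f^{(i)})_e for every edge e, and a symmetric positive semidefinite matrix L̃^{(i)} with ker L̃^{(i)} = span(1) and e^{−ε_solve} L(f^{(i)}) ⪯ L̃^{(i)} ⪯ e^{ε_solve} L(f^{(i)}), and define f^{(i+1)} := f^{(i)} + (ε_step μ/√m) (R̃^{(i)})⁻¹ B (L̃^{(i)})† χ_{st}, where R̃^{(i)} = diag(r̃^{(i)}).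 Then for every integer 0 ≤ i ≤ k/ε_step: (1) f^{(i)} is strictly feasible and 1/1000-centered for path parameter μ^{(i)}; (2) ‖R(f^{(i)})^{1/2} (f^{(i)} − f(μ^{(i)}))‖_∞ ≤ 0.1; and (3) e^{−0.2} r(f(μ^{(i)}))_e ≤ r(f^{(i)})_e ≤ e^{0.2} r(f(μ^{(i)}))_e for every edge e. -/
open Matrix

/-- The Laplacian `L(f) = Bᵀ R(f)⁻¹ B` induced by the resistances of `f`. -/
noncomputable def lapOf {V E : Type*} [Fintype V] [Fintype E] [DecidableEq E]
    (B : Matrix E V ℝ) (u f : E → ℝ) : Matrix V V ℝ :=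
  Bᵀ * Matrix.diagonal (fun e => (resist u f e)⁻¹) * B

/-- `f` is `γ`-centered for path parameter `μ`. -/
noncomputable def IsCenteredFlow {V E : Type*} [Fintype V] [Fintype E] [DecidableEq V]
    [DecidableEq E] (B : Matrix E V ℝ) (u : E → ℝ) (χst : V → ℝ)
    (Fstar γ μ : ℝ) (f : E → ℝ) : Prop :=
  ∃ Ld : Matrix V V ℝ, IsMoorePenrose (lapOf B u f) Ld ∧
    Real.sqrt ((Bᵀ *ᵥ f - (Fstar - μ) • χst) ⬝ᵥ
        (Ld *ᵥ (Bᵀ *ᵥ f - (Fstar - μ) • χst))) ≤ γ ∧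
    ∃ φ : V → ℝ,
      Real.sqrt (∑ e, (resist u f e)⁻¹ *
          ((B *ᵥ φ) e - ((u e - f e)⁻¹ - (u e + f e)⁻¹)) ^ 2) ≤ γ

theorem exists_mp {n : Type*} [Fintype n] [DecidableEq n] (A : Matrix n n ℝ) (hA : Aᵀ = A) :
    ∃ Ad, IsMoorePenrose A Ad := by
  have hs : IsSelfAdjoint A := by
    rw [IsSelfAdjoint, Matrix.star_eq_conjTranspose, Matrix.conjTranspose_eq_transpose_of_trivial, hA]
  have hc : ∀ g : ℝ → ℝ, ContinuousOn g (spectrum ℝ A) := fun g => by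
    rw [continuousOn_iff_continuous_domRestrict]
    exact continuous_of_discreteTopology
  have hid : cfc (fun x : ℝ => x) A = A := cfc_id' ℝ A
  have hm : ∀ g h : ℝ → ℝ, cfc g A * cfc h A = cfc (fun x => g x * h x) A := fun g h =>
    (cfc_mul g h A (hc _) (hc _)).symm
  have hl : ∀ g : ℝ → ℝ, A * cfc g A = cfc (fun x => x * g x) A := fun g => by
    rw [← hm (fun x => x) g, hid]
  have hr : ∀ g : ℝ → ℝ, cfc g A * A = cfc (fun x => g x * x) A := fun g => by
    rw [← hm g (fun x => x), hid]
  have ht : ∀ g : ℝ → ℝ, (cfc g A)ᵀ = cfc g A := fun g => by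
    have : IsSelfAdjoint (cfc g A) := cfc_predicate g A
    rwa [IsSelfAdjoint, Matrix.star_eq_conjTranspose,
      Matrix.conjTranspose_eq_transpose_of_trivial] at this
  refine ⟨cfc (fun x : ℝ => x⁻¹) A, ?_, ?_, ?_, ?_⟩
  · rw [hl, hr]
    conv_rhs => rw [← hid]
    congr 1; funext x; exact mul_inv_mul_cancel x
  · rw [hr, hm]
    congr 1; funext x; rcases eq_or_ne x 0 with rfl | h <;> simp [*]
  · rw [hl, ht]
  · rw [hr, ht]

noncomputable def wn {E : Type*} [Fintype E] (w x : E → ℝ) : ℝ := Real.sqrt (∑ e, w e * x e ^ 2)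

section wn
variable {E : Type*} [Fintype E]

theorem wn_nonneg (w x : E → ℝ) : 0 ≤ wn w x := Real.sqrt_nonneg _

theorem wn_sq {w : E → ℝ} (hw : ∀ e, 0 ≤ w e) (x : E → ℝ) : wn w x ^ 2 = ∑ e, w e * x e ^ 2 :=
  Real.sq_sqrt (Finset.sum_nonneg fun e _ => mul_nonneg (hw e) (sq_nonneg _))

theorem wn_eq_norm {w : E → ℝ} (hw : ∀ e, 0 ≤ w e) (x : E → ℝ) :
    wn w x = ‖(WithLp.toLp 2 (fun e => Real.sqrt (w e) * x e) : EuclideanSpace ℝ E)‖ := by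
  rw [EuclideanSpace.norm_eq, wn]
  congr 1
  refine Finset.sum_congr rfl fun e _ => ?_
  simp [mul_pow, Real.sq_sqrt (hw e)]

theorem wn_add {w : E → ℝ} (hw : ∀ e, 0 ≤ w e) (x y : E → ℝ) :
    wn w (fun e => x e + y e) ≤ wn w x + wn w y := by
  rw [wn_eq_norm hw, wn_eq_norm hw, wn_eq_norm hw]
  refine le_trans (le_of_eq ?_) (norm_add_le _ _)
  congr 1
  ext e
  simp [mul_add]

theorem wn_le {w w' : E → ℝ} {x y : E → ℝ} {M : ℝ} (hM : 0 ≤ M) (hw' : ∀ e, 0 ≤ w' e)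
    (h : ∀ e, w e * x e ^ 2 ≤ M ^ 2 * (w' e * y e ^ 2)) : wn w x ≤ M * wn w' y := by
  rw [wn]
  refine Real.sqrt_le_iff.2 ⟨mul_nonneg hM (wn_nonneg _ _), ?_⟩
  rw [mul_pow, wn_sq hw', Finset.mul_sum]
  exact Finset.sum_le_sum fun e _ => h e

theorem le_wn_sq {w : E → ℝ} (hw : ∀ e, 0 ≤ w e) (x : E → ℝ) (e : E) :
    w e * x e ^ 2 ≤ wn w x ^ 2 := by
  rw [wn_sq hw]
  exact Finset.single_le_sum (f := fun e => w e * x e ^ 2)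
    (fun e _ => mul_nonneg (hw e) (sq_nonneg _)) (Finset.mem_univ e)

theorem wn_cs {w : E → ℝ} (hw : ∀ e, 0 < w e) (x y : E → ℝ) :
    ∑ e, x e * y e ≤ wn (fun e => (w e)⁻¹) x * wn w y := by
  have h0 : ∀ e, 0 ≤ w e := fun e => (hw e).le
  have h0' : ∀ e, 0 ≤ (w e)⁻¹ := fun e => inv_nonneg.2 (h0 e)
  have := Finset.sum_mul_sq_le_sq_mul_sq Finset.univ (fun e => Real.sqrt (w e)⁻¹ * x e)
    (fun e => Real.sqrt (w e) * y e)
  have h1 : ∀ e, Real.sqrt (w e)⁻¹ * x e * (Real.sqrt (w e) * y e) = x e * y e := fun e => by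
    have : Real.sqrt (w e) ≠ 0 := (Real.sqrt_pos.2 (hw e)).ne'
    rw [Real.sqrt_inv]; field_simp
  simp only [h1, mul_pow, Real.sq_sqrt (h0 _), Real.sq_sqrt (h0' _)] at this
  rw [← wn_sq h0, ← wn_sq h0', ← mul_pow] at this
  exact le_of_sq_le_sq' this (mul_nonneg (wn_nonneg _ _) (wn_nonneg _ _))
where le_of_sq_le_sq' {a b : ℝ} (h : a ^ 2 ≤ b ^ 2) (hb : 0 ≤ b) : a ≤ b :=
  le_trans (le_abs_self a) (abs_le_of_sq_le_sq h hb)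

theorem wn_sum {w : E → ℝ} (hw : ∀ e, 0 ≤ w e) (x : ℕ → E → ℝ) (M : ℝ) (n : ℕ)
    (h : ∀ i < n, wn w (x i) ≤ M) :
    wn w (fun e => ∑ i ∈ Finset.range n, x i e) ≤ n * M := by
  induction n with
  | zero => simp [wn]
  | succ n ih =>
    simp only [Finset.sum_range_succ]
    refine le_trans (wn_add hw _ _) ?_
    have := ih (fun i hi => h i (by omega))
    have := h n (by omega)
    push_cast; linarith

end wn

/-! Scalar lemmas -/

theorem inv_sq_le {a b : ℝ} (ha : 0 < a) {d η : ℝ} (hη : 0 ≤ η)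
    (h : ((a ^ 2)⁻¹ + (b ^ 2)⁻¹) * d ^ 2 ≤ η ^ 2) : |d| ≤ η * a := by
  have h1 : (a ^ 2)⁻¹ * d ^ 2 ≤ η ^ 2 := by
    have : 0 ≤ (b ^ 2)⁻¹ * d ^ 2 := by positivity
    nlinarith
  have h2 : d ^ 2 ≤ (η * a) ^ 2 := by
    rw [inv_mul_le_iff₀ (by positivity)] at h1
    nlinarith
  exact abs_le_of_sq_le_sq h2 (by positivity)

theorem edge_close {u f d η : ℝ} (h1 : |f| < u) (hη : 0 ≤ η)
    (h : (((u - f) ^ 2)⁻¹ + ((u + f) ^ 2)⁻¹) * d ^ 2 ≤ η ^ 2) :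
    |d| ≤ η * (u - f) ∧ |d| ≤ η * (u + f) := by
  obtain ⟨h2, h3⟩ := abs_lt.1 h1
  exact ⟨inv_sq_le (by linarith) hη h, inv_sq_le (by linarith) hη (by rw [add_comm]; exact h)⟩

theorem taylor_one {a d : ℝ} (ha : 0 < a) (hd : |d| ≤ 1 / 2 * a) :
    |(a - d)⁻¹ - a⁻¹ - (a ^ 2)⁻¹ * d| ≤ 2 * (d ^ 2 * a⁻¹ ^ 3) := by
  obtain ⟨h2, h3⟩ := abs_le.1 hd
  have h4 : 0 < a - d := by linarith
  have : (a - d)⁻¹ - a⁻¹ - (a ^ 2)⁻¹ * d = d ^ 2 * a⁻¹ ^ 2 * (a - d)⁻¹ := by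
    field_simp; ring
  rw [this, abs_of_nonneg (by positivity)]
  have h5 : (a - d)⁻¹ ≤ 2 * a⁻¹ := by
    rw [inv_le_comm₀ h4 (by positivity), mul_inv, inv_inv]; linarith
  calc d ^ 2 * a⁻¹ ^ 2 * (a - d)⁻¹ ≤ d ^ 2 * a⁻¹ ^ 2 * (2 * a⁻¹) := by gcongr
    _ = _ := by ring

theorem taylor_zero {a d : ℝ} (ha : 0 < a) (hd : |d| ≤ 1 / 2 * a) :
    |(a - d)⁻¹ - a⁻¹| ≤ 2 * (|d| * a⁻¹ ^ 2) := by
  obtain ⟨h2, h3⟩ := abs_le.1 hd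
  have h4 : 0 < a - d := by linarith
  have : (a - d)⁻¹ - a⁻¹ = d * (a⁻¹ * (a - d)⁻¹) := by
    field_simp; ring
  rw [this, abs_mul, abs_of_nonneg (by positivity : 0 ≤ a⁻¹ * (a - d)⁻¹)]
  have h5 : (a - d)⁻¹ ≤ 2 * a⁻¹ := by
    rw [inv_le_comm₀ h4 (by positivity), mul_inv, inv_inv]; linarith
  calc |d| * (a⁻¹ * (a - d)⁻¹) ≤ |d| * (a⁻¹ * (2 * a⁻¹)) := by gcongr
    _ = _ := by ring

theorem edge_taylor_one {u f d : ℝ} (h1 : |f| < u)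
    (h : |d| ≤ 1 / 2 * (u - f) ∧ |d| ≤ 1 / 2 * (u + f)) :
    (((u - f) ^ 2)⁻¹ + ((u + f) ^ 2)⁻¹)⁻¹ *
      ((u - (f + d))⁻¹ - (u + (f + d))⁻¹ - ((u - f)⁻¹ - (u + f)⁻¹) -
        (((u - f) ^ 2)⁻¹ + ((u + f) ^ 2)⁻¹) * d) ^ 2 ≤
    4 * ((((u - f) ^ 2)⁻¹ + ((u + f) ^ 2)⁻¹) * d ^ 2) ^ 2 := by
  obtain ⟨h2, h3⟩ := abs_lt.1 h1
  have ha : 0 < u - f := by linarith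
  have hb : 0 < u + f := by linarith
  have t1 := taylor_one ha h.1
  have t2 := taylor_one (d := -d) hb (by rw [abs_neg]; exact h.2)
  rw [show u - (f + d) = u - f - d by ring, show u + (f + d) = u + f - (-d) by ring]
  generalize u - f = a at *
  generalize u + f = b at *
  set X := (a - d)⁻¹ - (b - -d)⁻¹ - (a⁻¹ - b⁻¹) - ((a ^ 2)⁻¹ + (b ^ 2)⁻¹) * d with hX
  have hXle : |X| ≤ 2 * d ^ 2 * (a⁻¹ ^ 3 + b⁻¹ ^ 3) := by
    have : X = ((a - d)⁻¹ - a⁻¹ - (a ^ 2)⁻¹ * d) - ((b - -d)⁻¹ - b⁻¹ - (b ^ 2)⁻¹ * -d) := by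
      rw [hX]; ring
    rw [this]
    refine le_trans (abs_sub _ _) ?_
    nlinarith
  have hr : 0 < (a ^ 2)⁻¹ + (b ^ 2)⁻¹ := by positivity
  rw [inv_mul_le_iff₀ hr]
  have h3 : (a⁻¹ ^ 3 + b⁻¹ ^ 3) ^ 2 ≤ ((a ^ 2)⁻¹ + (b ^ 2)⁻¹) ^ 3 := by
    rw [← inv_pow, ← inv_pow]
    have hp : 0 < a⁻¹ := by positivity
    have hq : 0 < b⁻¹ := by positivity
    generalize a⁻¹ = p at *
    generalize b⁻¹ = q at *
    have : 0 ≤ (p * q) ^ 2 * (3 * p ^ 2 + 3 * q ^ 2 - 2 * (p * q)) := by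
      apply mul_nonneg (by positivity); nlinarith [sq_nonneg (p - q)]
    nlinarith
  have h4 : X ^ 2 ≤ (2 * d ^ 2 * (a⁻¹ ^ 3 + b⁻¹ ^ 3)) ^ 2 := by
    rw [← sq_abs X]; gcongr
  calc X ^ 2 ≤ (2 * d ^ 2 * (a⁻¹ ^ 3 + b⁻¹ ^ 3)) ^ 2 := h4
    _ = 4 * d ^ 4 * (a⁻¹ ^ 3 + b⁻¹ ^ 3) ^ 2 := by ring
    _ ≤ 4 * d ^ 4 * ((a ^ 2)⁻¹ + (b ^ 2)⁻¹) ^ 3 := by gcongr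
    _ = _ := by ring

theorem edge_taylor_zero {u f d : ℝ} (h1 : |f| < u)
    (h : |d| ≤ 1 / 2 * (u - f) ∧ |d| ≤ 1 / 2 * (u + f)) :
    (((u - f) ^ 2)⁻¹ + ((u + f) ^ 2)⁻¹)⁻¹ *
      ((u - (f + d))⁻¹ - (u + (f + d))⁻¹ - ((u - f)⁻¹ - (u + f)⁻¹)) ^ 2 ≤
    2 ^ 2 * ((((u - f) ^ 2)⁻¹ + ((u + f) ^ 2)⁻¹) * d ^ 2) := by
  obtain ⟨h2, h3⟩ := abs_lt.1 h1
  have ha : 0 < u - f := by linarith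
  have hb : 0 < u + f := by linarith
  have t1 := taylor_zero ha h.1
  have t2 := taylor_zero (d := -d) hb (by rw [abs_neg]; exact h.2)
  rw [show u - (f + d) = u - f - d by ring, show u + (f + d) = u + f - (-d) by ring]
  generalize u - f = a at *
  generalize u + f = b at *
  set X := (a - d)⁻¹ - (b - -d)⁻¹ - (a⁻¹ - b⁻¹) with hX
  have hXle : |X| ≤ 2 * |d| * ((a ^ 2)⁻¹ + (b ^ 2)⁻¹) := by
    have : X = ((a - d)⁻¹ - a⁻¹) - ((b - -d)⁻¹ - b⁻¹) := by
      rw [hX]; ring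
    rw [this]
    refine le_trans (abs_sub _ _) ?_
    rw [abs_neg] at t2
    rw [← inv_pow, ← inv_pow]
    linarith
  have hr : 0 < (a ^ 2)⁻¹ + (b ^ 2)⁻¹ := by positivity
  rw [inv_mul_le_iff₀ hr]
  have h4 : X ^ 2 ≤ (2 * |d| * ((a ^ 2)⁻¹ + (b ^ 2)⁻¹)) ^ 2 := by
    rw [← sq_abs X]; gcongr
  calc X ^ 2 ≤ _ := h4
    _ = 4 * |d| ^ 2 * ((a ^ 2)⁻¹ + (b ^ 2)⁻¹) ^ 2 := by ring
    _ = _ := by rw [sq_abs]; ring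

theorem edge_mono {u f f' : ℝ} (h1 : |f| < u) (h1' : |f'| < u) :
    ((u - f')⁻¹ - (u + f')⁻¹) - ((u - f)⁻¹ - (u + f)⁻¹) =
      (f' - f) * ((u - f)⁻¹ * (u - f')⁻¹ + (u + f)⁻¹ * (u + f')⁻¹) := by
  obtain ⟨h2, h3⟩ := abs_lt.1 h1
  obtain ⟨h2', h3'⟩ := abs_lt.1 h1'
  have : u - f ≠ 0 := by linarith
  have : u + f ≠ 0 := by linarith
  have : u - f' ≠ 0 := by linarith
  have : u + f' ≠ 0 := by linarith
  field_simp
  ring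

/-- resistances compare when slacks compare -/
theorem resist_le {a b a' b' M : ℝ} (ha : 0 < a) (hb : 0 < b) (ha' : 0 < a') (hb' : 0 < b')
    (hM : 0 < M) (h1 : a ≤ M * a') (h2 : b ≤ M * b') :
    (a' ^ 2)⁻¹ + (b' ^ 2)⁻¹ ≤ M ^ 2 * ((a ^ 2)⁻¹ + (b ^ 2)⁻¹) := by
  have key : ∀ {x y : ℝ}, 0 < x → 0 < y → x ≤ M * y → (y ^ 2)⁻¹ ≤ M ^ 2 * (x ^ 2)⁻¹ := by
    intro x y hx hy h
    rw [← div_eq_mul_inv, le_div_iff₀ (by positivity), inv_mul_le_iff₀ (by positivity)]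
    nlinarith
  have := key ha ha' h1
  have := key hb hb' h2
  linarith

theorem slack_ratio {a a' T : ℝ} (ha : 0 < a) (ha' : 0 < a')
    (h : (a - a') ^ 2 * (a⁻¹ * a'⁻¹) ≤ T) : a ≤ (T + 2) * a' ∧ a' ≤ (T + 2) * a := by
  have h1 : (a - a') ^ 2 ≤ T * (a * a') := by
    rw [← mul_inv, mul_inv_le_iff₀ (by positivity)] at h
    exact h
  have h2 : a ^ 2 + a' ^ 2 ≤ (T + 2) * (a * a') := by nlinarith
  constructor
  · have : a * a ≤ a * ((T + 2) * a') := by nlinarith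
    exact le_of_mul_le_mul_left this ha
  · have : a' * a' ≤ a' * ((T + 2) * a) := by nlinarith
    exact le_of_mul_le_mul_left this ha'

/-! Linear algebra -/
section lin
variable {V E : Type*} [Fintype V] [Fintype E]

theorem resist_pos {u f : E → ℝ} (hf : ∀ e, |f e| < u e) (e : E) : 0 < resist u f e := by
  obtain ⟨h2, h3⟩ := abs_lt.1 (hf e)
  have : 0 < u e - f e := by linarith
  have : 0 < u e + f e := by linarith
  rw [resist]; positivity

theorem dot_BT (B : Matrix E V ℝ) (q : E → ℝ) (x : V → ℝ) :
    (Bᵀ *ᵥ q) ⬝ᵥ x = ∑ e, q e * (B *ᵥ x) e := by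
  rw [Matrix.mulVec_transpose, ← Matrix.dotProduct_mulVec]
  rfl

theorem lapOf_mulVec [DecidableEq E] (B : Matrix E V ℝ) (u f : E → ℝ) (y : V → ℝ) :
    lapOf B u f *ᵥ y = Bᵀ *ᵥ (fun e => (resist u f e)⁻¹ * (B *ᵥ y) e) := by
  rw [lapOf, ← Matrix.mulVec_mulVec, ← Matrix.mulVec_mulVec]
  congr 1
  funext e
  rw [Matrix.mulVec_diagonal]

theorem lap_dot [DecidableEq E] (B : Matrix E V ℝ) (u f : E → ℝ) (x y : V → ℝ) :
    x ⬝ᵥ (lapOf B u f *ᵥ y) = ∑ e, (resist u f e)⁻¹ * ((B *ᵥ x) e * (B *ᵥ y) e) := by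
  rw [lapOf_mulVec, dotProduct_comm, dot_BT]
  exact Finset.sum_congr rfl fun e _ => by ring

theorem lap_dot_self [DecidableEq E] (B : Matrix E V ℝ) {u f : E → ℝ} (hf : ∀ e, |f e| < u e)
    (x : V → ℝ) :
    x ⬝ᵥ (lapOf B u f *ᵥ x) = wn (fun e => (resist u f e)⁻¹) (B *ᵥ x) ^ 2 := by
  rw [lap_dot, wn_sq (fun e => (inv_pos.2 (resist_pos hf e)).le)]
  exact Finset.sum_congr rfl fun e _ => by ring

theorem lap_symm [DecidableEq E] (B : Matrix E V ℝ) (u f : E → ℝ) :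
    (lapOf B u f)ᵀ = lapOf B u f := by
  rw [lapOf, Matrix.transpose_mul, Matrix.transpose_mul, Matrix.transpose_transpose,
    Matrix.diagonal_transpose, Matrix.mul_assoc]

theorem mp_solve [Nonempty V] {M Md : Matrix V V ℝ} (hM : Mᵀ = M)
    (hker : ∀ x : V → ℝ, M *ᵥ x = 0 ↔ ∃ c' : ℝ, x = fun _ => c')
    (hMP : IsMoorePenrose M Md) (d : V → ℝ) (hd : ∑ v, d v = 0) : M *ᵥ (Md *ᵥ d) = d := by
  obtain ⟨h1, h2, h3, h4⟩ := hMP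
  have hz : M *ᵥ (d - M *ᵥ (Md *ᵥ d)) = 0 := by
    have e1 : M * (M * Md) = M := by
      have := congrArg Matrix.transpose h1
      rw [Matrix.transpose_mul, h3, hM] at this
      exact this
    rw [Matrix.mulVec_sub, Matrix.mulVec_mulVec, Matrix.mulVec_mulVec, Matrix.mul_assoc, e1,
      sub_self]
  obtain ⟨c', hc'⟩ := (hker _).1 hz
  have hone : M *ᵥ (fun _ => (1 : ℝ)) = 0 := (hker _).2 ⟨1, rfl⟩
  have hs : (fun _ : V => (1 : ℝ)) ⬝ᵥ (d - M *ᵥ (Md *ᵥ d)) = 0 := by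
    rw [dotProduct_sub, Matrix.dotProduct_mulVec, ← Matrix.mulVec_transpose, hM, hone,
      zero_dotProduct, sub_zero]
    simp [dotProduct, hd]
  rw [hc'] at hs
  simp [dotProduct] at hs
  subst hs
  have := congrArg (fun x => x + M *ᵥ (Md *ᵥ d)) hc'
  simp only [sub_add_cancel] at this
  rw [this]
  funext v
  simp only [Pi.add_apply, zero_add, ← this]

theorem bilin_cs {S L : Matrix V V ℝ} (hS : Sᵀ = S) {κ : ℝ}
    (hL : Lᵀ = L)
    (h : ∀ v, |v ⬝ᵥ (S *ᵥ v)| ≤ κ * (v ⬝ᵥ (L *ᵥ v))) (x y : V → ℝ) :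
    (x ⬝ᵥ (S *ᵥ y)) ^ 2 ≤ κ ^ 2 * ((x ⬝ᵥ (L *ᵥ x)) * (y ⬝ᵥ (L *ᵥ y))) := by
  have symS : ∀ {T : Matrix V V ℝ}, Tᵀ = T → y ⬝ᵥ (T *ᵥ x) = x ⬝ᵥ (T *ᵥ y) := by
    intro T hT
    rw [Matrix.dotProduct_mulVec, ← Matrix.mulVec_transpose, hT, dotProduct_comm]
  have key : ∀ t : ℝ, 0 ≤ (κ * (y ⬝ᵥ (L *ᵥ y))) * (t * t) + (-2 * (x ⬝ᵥ (S *ᵥ y))) * t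
      + κ * (x ⬝ᵥ (L *ᵥ x)) := by
    intro t
    have h1 := (abs_le.1 (h (x + t • y))).2
    have h2 := (abs_le.1 (h (x - t • y))).1
    simp only [Matrix.mulVec_add, Matrix.mulVec_sub, Matrix.mulVec_smul, dotProduct_add,
      dotProduct_sub, add_dotProduct, sub_dotProduct, smul_dotProduct, dotProduct_smul,
      smul_eq_mul, symS hS, symS hL] at h1 h2
    nlinarith
  have := discrim_le_zero key
  rw [discrim] at this
  nlinarith

theorem psd_le {A C : Matrix V V ℝ} (h : (A - C).PosSemidef) (v : V → ℝ) :
    v ⬝ᵥ (C *ᵥ v) ≤ v ⬝ᵥ (A *ᵥ v) := by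
  have := h.dotProduct_mulVec_nonneg v
  rw [Matrix.sub_mulVec, dotProduct_sub] at this
  simp at this
  linarith

theorem mp_norm_le [Nonempty V] [DecidableEq E] (B : Matrix E V ℝ) {u f : E → ℝ}
    (hf : ∀ e, |f e| < u e)
    (hker : ∀ x : V → ℝ, lapOf B u f *ᵥ x = 0 ↔ ∃ c' : ℝ, x = fun _ => c')
    (hB1 : ∀ c' : ℝ, B *ᵥ (fun _ => c') = 0)
    {Ld : Matrix V V ℝ} (hMP : IsMoorePenrose (lapOf B u f) Ld) (q : E → ℝ) :
    Real.sqrt ((Bᵀ *ᵥ q) ⬝ᵥ (Ld *ᵥ (Bᵀ *ᵥ q))) ≤ wn (resist u f) q := by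
  have hd : ∑ v, (Bᵀ *ᵥ q) v = 0 := by
    have := dot_BT B q (fun _ => 1)
    rw [hB1] at this
    simpa [dotProduct] using this
  have hs := mp_solve (lap_symm B u f) hker hMP _ hd
  set w := Ld *ᵥ (Bᵀ *ᵥ q) with hw
  have h1 : (Bᵀ *ᵥ q) ⬝ᵥ w = wn (fun e => (resist u f e)⁻¹) (B *ᵥ w) ^ 2 := by
    rw [← lap_dot_self B hf, hs, dotProduct_comm]
  have h2 : (Bᵀ *ᵥ q) ⬝ᵥ w ≤ wn (fun e => (resist u f e)⁻¹) (B *ᵥ w) * wn (resist u f) q := by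
    rw [dot_BT]
    refine le_trans (le_of_eq ?_) (wn_cs (resist_pos hf) _ _)
    exact Finset.sum_congr rfl fun e _ => mul_comm _ _
  rw [h1] at h2 ⊢
  rw [Real.sqrt_sq (wn_nonneg _ _)]
  have h3 := wn_nonneg (fun e => (resist u f e)⁻¹) (B *ᵥ w)
  rcases h3.eq_or_lt with h | h
  · rw [← h]; exact wn_nonneg _ _
  · rw [sq] at h2
    exact le_of_mul_le_mul_left h2 h

theorem step_lemma [Nonempty V] [DecidableEq V] [DecidableEq E] (B : Matrix E V ℝ) {u f : E → ℝ}
    (hf : ∀ e, |f e| < u e)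
    (hker : ∀ x : V → ℝ, lapOf B u f *ᵥ x = 0 ↔ ∃ c' : ℝ, x = fun _ => c')
    (hB1 : ∀ c' : ℝ, B *ᵥ (fun _ => c') = 0)
    {χ : V → ℝ} {y : E → ℝ} (hy : Bᵀ *ᵥ y = χ) {K : ℝ} (hK : wn (resist u f) y ≤ K)
    {ε : ℝ} (hε : 0 ≤ ε) (hε' : ε ≤ 1 / 100) {rt : E → ℝ} {Lt Ltd : Matrix V V ℝ}
    (hrt : ∀ e, Real.exp (-ε) * resist u f e ≤ rt e ∧ rt e ≤ Real.exp ε * resist u f e)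
    (hpsd : Lt.PosSemidef)
    (hkt : ∀ x : V → ℝ, Lt *ᵥ x = 0 ↔ ∃ c' : ℝ, x = fun _ => c')
    (hl1 : (Lt - Real.exp (-ε) • lapOf B u f).PosSemidef)
    (hl2 : (Real.exp ε • lapOf B u f - Lt).PosSemidef)
    (hMP : IsMoorePenrose Lt Ltd) :
    wn (resist u f) (fun e => (rt e)⁻¹ * (B *ᵥ (Ltd *ᵥ χ)) e) ≤ 6 / 5 * K ∧
    (∃ q : E → ℝ, Bᵀ *ᵥ (fun e => (rt e)⁻¹ * (B *ᵥ (Ltd *ᵥ χ)) e) - χ = Bᵀ *ᵥ q ∧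
      wn (resist u f) q ≤ 5 * ε * K) ∧
    wn (fun e => (resist u f e)⁻¹)
      (fun e => resist u f e * ((rt e)⁻¹ * (B *ᵥ (Ltd *ᵥ χ)) e) - (B *ᵥ (Ltd *ᵥ χ)) e) ≤
        3 * ε * K := by
  have hr := resist_pos hf
  have hr0 : ∀ e, 0 ≤ resist u f e := fun e => (hr e).le
  have hri0 : ∀ e, 0 ≤ (resist u f e)⁻¹ := fun e => inv_nonneg.2 (hr0 e)
  have hK0 : 0 ≤ K := le_trans (wn_nonneg _ _) hK
  have hχ : ∑ v, χ v = 0 := by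
    have := dot_BT B y (fun _ => 1)
    rw [hB1, hy] at this
    simpa [dotProduct] using this
  have hLts : Ltᵀ = Lt := by
    have := hpsd.isHermitian
    rwa [Matrix.IsHermitian, Matrix.conjTranspose_eq_transpose_of_trivial] at this
  have hsol := mp_solve hLts hkt hMP χ hχ
  set w := Ltd *ᵥ χ with hw
  set x := B *ᵥ w with hx
  set N := wn (fun e => (resist u f e)⁻¹) x with hN
  have hN0 : 0 ≤ N := wn_nonneg _ _
  have ex1 : Real.exp ε ≤ 1 + 2 * ε := by
    have := Real.abs_exp_sub_one_le (x := ε) (by rw [abs_of_nonneg hε]; linarith)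
    rw [abs_of_nonneg hε] at this
    linarith [(abs_le.1 this).2]
  have ex2 : 1 - ε ≤ Real.exp (-ε) := by linarith [Real.add_one_le_exp (-ε)]
  have hQ := lap_dot_self B hf
  -- energy bound
  have hNK : N ≤ 11 / 10 * K := by
    have h1 := psd_le hl1 w
    rw [Matrix.smul_mulVec, dotProduct_smul, hQ, smul_eq_mul, hsol, ← hy, dotProduct_comm w,
      dot_BT] at h1
    have h2 : ∑ e, y e * (B *ᵥ w) e ≤ N * wn (resist u f) y := by
      refine le_trans (le_of_eq ?_) (wn_cs hr _ _)
      exact Finset.sum_congr rfl fun e _ => mul_comm _ _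
    have h3 : (1 - ε) * N ^ 2 ≤ Real.exp (-ε) * N ^ 2 := by gcongr
    have h4 : (1 - ε) * N ^ 2 ≤ N * K := by
      have : N * wn (resist u f) y ≤ N * K := by gcongr
      linarith
    rcases hN0.eq_or_lt with h | h
    · rw [← h]; positivity
    · have : N * ((1 - ε) * N) ≤ N * K := by linarith
      have := le_of_mul_le_mul_left this h
      nlinarith
  -- ratio
  have hrat : ∀ e, |resist u f e * (rt e)⁻¹ - 1| ≤ 2 * ε := by
    intro e
    obtain ⟨h1, h2⟩ := hrt e
    have hrt0 : 0 < rt e := lt_of_lt_of_le (mul_pos (Real.exp_pos _) (hr e)) h1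
    rw [abs_le]
    constructor
    · have : 1 - 2 * ε ≤ resist u f e * (rt e)⁻¹ := by
        rw [← div_eq_mul_inv, le_div_iff₀ hrt0]
        have : rt e ≤ (1 + 2 * ε) * resist u f e := h2.trans (by gcongr; exact hr0 e)
        nlinarith [hr e, mul_nonneg (mul_nonneg hε hε) (hr0 e)]
      linarith
    · have : resist u f e * (rt e)⁻¹ ≤ 1 + 2 * ε := by
        rw [← div_eq_mul_inv, div_le_iff₀ hrt0]
        have : (1 - ε) * resist u f e ≤ rt e := le_trans (by gcongr; exact hr0 e) h1
        have h5 : (1 + 2 * ε) * ((1 - ε) * resist u f e) ≤ (1 + 2 * ε) * rt e := by gcongr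
        have h6 : 0 ≤ (ε * (1 - 2 * ε)) * resist u f e :=
          mul_nonneg (mul_nonneg hε (by linarith)) (hr0 e)
        nlinarith
      linarith
  have hδ : wn (resist u f) (fun e => (rt e)⁻¹ * x e) ≤ 21 / 20 * N := by
    refine wn_le (by norm_num) hri0 fun e => ?_
    have h1 : |resist u f e * (rt e)⁻¹| ≤ 21 / 20 := by
      have := abs_le.1 (hrat e)
      rw [abs_le]; constructor <;> linarith [this.1, this.2]
    have h2 : (resist u f e * (rt e)⁻¹) ^ 2 ≤ (21 / 20) ^ 2 := by
      rw [← sq_abs]; gcongr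
    calc resist u f e * ((rt e)⁻¹ * x e) ^ 2
        = (resist u f e * (rt e)⁻¹) ^ 2 * ((resist u f e)⁻¹ * x e ^ 2) := by
          have := (hr e).ne'
          field_simp
      _ ≤ _ := by
          gcongr
          exact mul_nonneg (hri0 e) (sq_nonneg _)
  have hη : wn (fun e => (resist u f e)⁻¹) (fun e => resist u f e * ((rt e)⁻¹ * x e) - x e) ≤
      2 * ε * N := by
    refine wn_le (by positivity) hri0 fun e => ?_
    have h2 : (resist u f e * (rt e)⁻¹ - 1) ^ 2 ≤ (2 * ε) ^ 2 := by
      rw [← sq_abs]; gcongr; exact hrat e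
    calc (resist u f e)⁻¹ * (resist u f e * ((rt e)⁻¹ * x e) - x e) ^ 2
        = (resist u f e * (rt e)⁻¹ - 1) ^ 2 * ((resist u f e)⁻¹ * x e ^ 2) := by ring
      _ ≤ _ := by
          gcongr
          exact mul_nonneg (hri0 e) (sq_nonneg _)
  refine ⟨by linarith, ?_, by nlinarith⟩
  obtain ⟨Ld, hLd⟩ := exists_mp _ (lap_symm B u f)
  have hsolL := mp_solve (lap_symm B u f) hker hLd χ hχ
  set w0 := Ld *ᵥ χ with hw0
  refine ⟨fun e => (rt e)⁻¹ * x e - (resist u f e)⁻¹ * (B *ᵥ w0) e, ?_, ?_⟩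
  · rw [lapOf_mulVec] at hsolL
    conv_lhs => rw [← hsolL]
    rw [← Matrix.mulVec_sub]
    rfl
  · have hz : wn (fun e => (resist u f e)⁻¹) (B *ᵥ (w - w0)) ≤ 2 * ε * N := by
      set z := w - w0 with hz
      have h1 : z ⬝ᵥ (lapOf B u f *ᵥ z) = z ⬝ᵥ ((lapOf B u f - Lt) *ᵥ w) := by
        rw [Matrix.sub_mulVec, hsol, hz, Matrix.mulVec_sub, hsolL]
      have h2 := bilin_cs (S := lapOf B u f - Lt) (L := lapOf B u f) (κ := 2 * ε)
        (by rw [Matrix.transpose_sub, lap_symm, hLts]) (lap_symm B u f) (fun v => by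
          have p1 := psd_le hl1 v
          have p2 := psd_le hl2 v
          rw [Matrix.smul_mulVec, dotProduct_smul, smul_eq_mul] at p1 p2
          rw [Matrix.sub_mulVec, dotProduct_sub]
          have p3 : 0 ≤ v ⬝ᵥ (lapOf B u f *ᵥ v) := by rw [hQ]; positivity
          rw [abs_le]
          constructor <;> nlinarith) z w
      rw [← h1, hQ, hQ] at h2
      have h3 : wn (fun e => (resist u f e)⁻¹) (B *ᵥ z) ^ 2 ≤ (2 * ε * N) ^ 2 := by
        set A := wn (fun e => (resist u f e)⁻¹) (B *ᵥ z) ^ 2 with hA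
        have hA0 : 0 ≤ A := sq_nonneg _
        rcases hA0.eq_or_lt with h | h
        · rw [← h]; positivity
        · have : A * A ≤ A * (2 * ε * N) ^ 2 := by
            calc A * A = A ^ 2 := by ring
              _ ≤ _ := h2
              _ = _ := by rw [hN, hx]; ring
          exact le_of_mul_le_mul_left this h
      exact (abs_le_of_sq_le_sq' h3 (by positivity)).2
    have e1 : (fun e => (rt e)⁻¹ * x e - (resist u f e)⁻¹ * (B *ᵥ w0) e) =
        fun e => (fun e => (resist u f e)⁻¹ * (resist u f e * ((rt e)⁻¹ * x e) - x e)) e +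
          (fun e => (resist u f e)⁻¹ * (B *ᵥ (w - w0)) e) e := by
      funext e
      have := (hr e).ne'
      rw [Matrix.mulVec_sub, ← hx]
      simp only [Pi.sub_apply]
      field_simp
      ring
    rw [e1]
    refine le_trans (wn_add hr0 _ _) ?_
    have conv : ∀ g : E → ℝ, wn (resist u f) (fun e => (resist u f e)⁻¹ * g e) ≤
        1 * wn (fun e => (resist u f e)⁻¹) g := fun g => by
      refine wn_le (by norm_num) hri0 fun e => le_of_eq ?_
      have := (hr e).ne'
      field_simp
    have c1 := conv (fun e => resist u f e * ((rt e)⁻¹ * x e) - x e)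
    have c2 := conv (B *ᵥ (w - w0))
    have : 0 ≤ ε * K := by positivity
    have : ε * N ≤ ε * (11 / 10 * K) := by gcongr
    nlinarith

end lin

/-! Graph part -/
section graph
variable {V E : Type*} [Fintype V] [Fintype E]

theorem pairing {B : Matrix E V ℝ} {χ : V → ℝ} {s t : V}
    (hχ : ∀ x : V → ℝ, χ ⬝ᵥ x = x t - x s) {f : E → ℝ} {F : ℝ} (h : Bᵀ *ᵥ f = F • χ) (x : V → ℝ) :
    ∑ e, f e * (B *ᵥ x) e = F * (x t - x s) := by
  rw [← dot_BT, h, smul_dotProduct, hχ, smul_eq_mul]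

theorem opt_term {u f g : ℝ} (hf : |f| < u) (hg : |g| ≤ u) :
    (g - f) * ((u - f)⁻¹ - (u + f)⁻¹) ≤ 2 := by
  obtain ⟨h2, h3⟩ := abs_lt.1 hf
  obtain ⟨h4, h5⟩ := abs_le.1 hg
  have ha : 0 < u - f := by linarith
  have hb : 0 < u + f := by linarith
  have h1 : (g - f) * (u - f)⁻¹ ≤ 1 := by
    rw [← div_eq_mul_inv, div_le_one ha]; linarith
  have h2 : (f - g) * (u + f)⁻¹ ≤ 1 := by
    rw [← div_eq_mul_inv, div_le_one hb]; linarith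
  linarith

theorem lap_ker [DecidableEq E] {head tail : E → V} {B : Matrix E V ℝ}
    (hB : ∀ x e, (B *ᵥ x) e = x (head e) - x (tail e))
    (hconn : ∀ x : V → ℝ, (∀ e, x (head e) = x (tail e)) → ∀ v w, x v = x w)
    [Nonempty V] {u f : E → ℝ} (hf : ∀ e, |f e| < u e) (x : V → ℝ) :
    lapOf B u f *ᵥ x = 0 ↔ ∃ c' : ℝ, x = fun _ => c' := by
  constructor
  · intro h
    have h1 := lap_dot_self B hf x
    have hr := resist_pos hf
    have hri0 : ∀ e, 0 ≤ (resist u f e)⁻¹ := fun e => (inv_pos.2 (hr e)).le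
    rw [h, dotProduct_zero] at h1
    have h2 : ∀ e, x (head e) = x (tail e) := by
      intro e
      have h3 := le_wn_sq hri0 (B *ᵥ x) e
      rw [← h1] at h3
      have h4 : (B *ᵥ x) e ^ 2 ≤ 0 := by
        by_contra hc
        push Not at hc
        have := mul_pos (inv_pos.2 (hr e)) hc
        linarith
      have h5 : (B *ᵥ x) e = 0 := by nlinarith [sq_nonneg ((B *ᵥ x) e)]
      rw [hB] at h5
      linarith
    obtain ⟨v0⟩ := ‹Nonempty V›
    exact ⟨x v0, funext fun v => hconn x h2 v v0⟩
  · rintro ⟨c', rfl⟩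
    rw [lapOf_mulVec]
    have : (fun e => (resist u f e)⁻¹ * (B *ᵥ fun _ => c') e) = 0 := by
      funext e; rw [hB]; simp
    rw [this, Matrix.mulVec_zero]

/-- Preconditioning edges keep slack at least `μ/(3m)` along the central path. -/
theorem prec_bound [DecidableEq V] {head tail : E → V} {s t : V} (hst : s ≠ t) {B : Matrix E V ℝ}
    (hB : ∀ x e, (B *ᵥ x) e = x (head e) - x (tail e)) {χ : V → ℝ}
    (hχ : ∀ x : V → ℝ, χ ⬝ᵥ x = x t - x s) {u : E → ℝ} {U : ℝ} {P : Finset E}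
    (hP : Preconditioned head tail s t u U P) {Fstar : ℝ}
    (hF : ∃ f : E → ℝ, (∀ e, |f e| ≤ u e) ∧ Bᵀ *ᵥ f = Fstar • χ) {μ : ℝ} (hμ : 0 < μ)
    (hμF : μ ≤ Fstar) {f : E → ℝ} (hf : IsCentralFlow B u χ Fstar μ f) :
    ∀ p ∈ P, (u p - f p)⁻¹ ≤ 3 * (Fintype.card E / μ) ∧ (u p + f p)⁻¹ ≤ 3 * (Fintype.card E / μ) := by
  obtain ⟨hfe, hfr, φ, hφ⟩ := hf
  obtain ⟨fs, hfs, hfsr⟩ := hF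
  obtain ⟨hU, hPe, hnP, -⟩ := hP
  intro p hp
  obtain ⟨hup, hpo⟩ := hPe p hp
  have huU : ∀ e, u e ≤ 2 * U := fun e => by
    by_cases he : e ∈ P
    · exact (hPe e he).1.le
    · linarith [hnP e he]
  set m : ℝ := (Fintype.card E : ℝ) with hm
  -- total capacity bound
  have hFm : Fstar ≤ m * (2 * U) := by
    have h1 := pairing hχ hfsr (fun v => if v = t then 1 else 0)
    simp only [if_true, if_neg hst, sub_zero, mul_one] at h1
    rw [← h1]
    have : ∑ e, fs e * (B *ᵥ fun v => if v = t then (1 : ℝ) else 0) e ≤ ∑ _e : E, 2 * U := by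
      refine Finset.sum_le_sum fun e _ => ?_
      rw [hB]
      have h2 := abs_le.1 (hfs e)
      have h3 := huU e
      split_ifs <;> linarith [h2.1, h2.2]
    refine this.trans (le_of_eq ?_)
    simp [hm]
  have hself := pairing hχ hfr φ
  have hD1 : μ * (φ t - φ s) ≤ m * 2 := by
    have h1 := pairing hχ hfsr φ
    have h2 : ∑ e, (fs e - f e) * (B *ᵥ φ) e ≤ ∑ _e : E, (2 : ℝ) := by
      refine Finset.sum_le_sum fun e _ => ?_
      rw [hφ]
      exact opt_term (hfe e) (hfs e)
    simp only [sub_mul, Finset.sum_sub_distrib, h1, hself] at h2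
    simp at h2
    linarith
  have hD2 : (2 * Fstar - μ) * (-(φ t - φ s)) ≤ m * 2 := by
    have h1 := pairing hχ hfsr φ
    have h2 : ∑ e, (-fs e - f e) * (B *ᵥ φ) e ≤ ∑ _e : E, (2 : ℝ) := by
      refine Finset.sum_le_sum fun e _ => ?_
      rw [hφ]
      exact opt_term (hfe e) (by rw [abs_neg]; exact hfs e)
    simp only [sub_mul, neg_mul, Finset.sum_sub_distrib, Finset.sum_neg_distrib, h1, hself] at h2
    simp at h2
    linarith
  have hm0 : 0 ≤ m := Nat.cast_nonneg _
  have hDa : φ t - φ s ≤ 2 * (m / μ) := by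
    rw [mul_div_assoc', le_div_iff₀ hμ]; linarith
  have hDb : -(φ t - φ s) ≤ 2 * (m / μ) := by
    rw [mul_div_assoc', le_div_iff₀ hμ]
    by_cases h : 0 ≤ -(φ t - φ s)
    · nlinarith
    · push Not at h; nlinarith
  have hg1 : (u p - f p)⁻¹ - (u p + f p)⁻¹ ≤ 2 * (m / μ) := by
    rw [← hφ, hB]
    rcases hpo with ⟨h1, h2⟩ | ⟨h1, h2⟩ <;> rw [h1, h2] <;> linarith
  have hg2 : (u p + f p)⁻¹ - (u p - f p)⁻¹ ≤ 2 * (m / μ) := by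
    rw [← neg_sub, ← hφ, hB]
    rcases hpo with ⟨h1, h2⟩ | ⟨h1, h2⟩ <;> rw [h1, h2] <;> linarith
  obtain ⟨h2, h3⟩ := abs_lt.1 (hfe p)
  have ha : 0 < u p - f p := by linarith
  have hb : 0 < u p + f p := by linarith
  have key : ∀ z : ℝ, 2 * U ≤ z → z⁻¹ ≤ m / μ := by
    intro z hz
    have hz0 : 0 < z := by linarith
    rw [inv_le_comm₀ hz0 (by
      have : 0 < m * (2 * U) := by linarith
      have : 0 < m := by
        by_contra hc; push Not at hc; nlinarith
      positivity), inv_div, div_le_iff₀ (by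
        by_contra hc; push Not at hc; nlinarith)]
    nlinarith
  have hmm : 0 ≤ m / μ := by positivity
  rcases le_total 0 (f p) with h | h
  · have := key (u p + f p) (by linarith)
    constructor <;> linarith
  · have := key (u p - f p) (by linarith)
    constructor <;> linarith

/-- Monotonicity quantity between two central flows. -/
theorem central_T [DecidableEq V] {head tail : E → V} {s t : V} (hst : s ≠ t) {B : Matrix E V ℝ}
    (hB : ∀ x e, (B *ᵥ x) e = x (head e) - x (tail e)) {χ : V → ℝ}
    (hχ : ∀ x : V → ℝ, χ ⬝ᵥ x = x t - x s) {u : E → ℝ} {U : ℝ} {P : Finset E}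
    (hP : Preconditioned head tail s t u U P) {Fstar : ℝ}
    (hF : ∃ f : E → ℝ, (∀ e, |f e| ≤ u e) ∧ Bᵀ *ᵥ f = Fstar • χ) {μ μ' : ℝ} (hμ : 0 < μ)
    (hμF : μ ≤ Fstar) (hμ' : 0 < μ') (hle : μ' ≤ μ)
    {f f' : E → ℝ} (hf : IsCentralFlow B u χ Fstar μ f) (hf' : IsCentralFlow B u χ Fstar μ' f') :
    ∑ e, (f' e - f e) ^ 2 * ((u e - f e)⁻¹ * (u e - f' e)⁻¹ + (u e + f e)⁻¹ * (u e + f' e)⁻¹) ≤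
      36 * Fintype.card E * (μ - μ') ^ 2 / (μ * μ') := by
  have b1 := prec_bound hst hB hχ hP hF hμ hμF hf
  have b2 := prec_bound hst hB hχ hP hF hμ' (hle.trans hμF) hf'
  obtain ⟨hfe, hfr, φ, hφ⟩ := hf
  obtain ⟨hfe', hfr', φ', hφ'⟩ := hf'
  obtain ⟨hU, hPe, hnP, hcard⟩ := hP
  set m : ℝ := (Fintype.card E : ℝ) with hm
  have hm0 : 0 ≤ m := Nat.cast_nonneg _
  set W : E → ℝ := fun e => (u e - f e)⁻¹ * (u e - f' e)⁻¹ + (u e + f e)⁻¹ * (u e + f' e)⁻¹ with hW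
  have hpos : ∀ e, 0 < u e - f e ∧ 0 < u e + f e ∧ 0 < u e - f' e ∧ 0 < u e + f' e := fun e => by
    have h1 := abs_lt.1 (hfe e)
    have h2 := abs_lt.1 (hfe' e)
    refine ⟨?_, ?_, ?_, ?_⟩ <;> linarith [h1.1, h1.2, h2.1, h2.2]
  have hW0 : ∀ e, 0 < W e := fun e => by
    obtain ⟨h1, h2, h3, h4⟩ := hpos e
    simp only [hW]; positivity
  set ψ := φ' - φ with hψ
  have hBψ : ∀ e, (B *ᵥ ψ) e = (f' e - f e) * W e := fun e => by
    rw [hψ, Matrix.mulVec_sub, Pi.sub_apply, hφ, hφ', edge_mono (hfe e) (hfe' e)]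
  have hdr : Bᵀ *ᵥ (f' - f) = (μ - μ') • χ := by
    rw [Matrix.mulVec_sub, hfr, hfr', ← sub_smul]; congr 1; ring
  have hT : ∑ e, (f' e - f e) ^ 2 * W e = (μ - μ') * (ψ t - ψ s) := by
    rw [← pairing hχ hdr ψ]
    refine Finset.sum_congr rfl fun e _ => ?_
    rw [hBψ, Pi.sub_apply]; ring
  have hgoal : ∑ e, (f' e - f e) ^ 2 * W e ≤ 36 * m * (μ - μ') ^ 2 / (μ * μ') := by
    rw [hT]
    rcases le_or_gt (ψ t - ψ s) 0 with hD | hD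
    · exact le_trans (mul_nonpos_of_nonneg_of_nonpos (by linarith) hD) (by positivity)
    set x : V → ℝ := fun v => if ψ t ≤ ψ v then 1 else 0 with hx
    have hxs : x s = 0 := by simp only [hx]; rw [if_neg]; linarith
    have hxt : x t = 1 := by simp [hx]
    have hp := pairing hχ hdr x
    rw [hxs, hxt, sub_zero, mul_one] at hp
    have hterm : ∀ e, 0 ≤ (f' - f) e * (B *ᵥ x) e := by
      intro e
      have h1 := hBψ e
      have h2 := hW0 e
      rw [hB] at h1
      rw [hB, Pi.sub_apply]
      rcases lt_trichotomy (f' e - f e) 0 with h | h | h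
      · have : ψ (head e) < ψ (tail e) := by nlinarith
        apply mul_nonneg_of_nonpos_of_nonpos h.le
        simp only [hx]
        split_ifs <;> linarith
      · rw [h]; simp
      · have : ψ (tail e) < ψ (head e) := by nlinarith
        apply mul_nonneg h.le
        simp only [hx]
        split_ifs <;> linarith
    have hPterm : ∀ p ∈ P, (ψ t - ψ s) ≤ (18 * (m / μ) * (m / μ')) * ((f' - f) p * (B *ᵥ x) p) := by
      intro p hp
      obtain ⟨hup, hpo⟩ := hPe p hp
      obtain ⟨a1, a2⟩ := b1 p hp
      obtain ⟨a3, a4⟩ := b2 p hp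
      obtain ⟨h1, h2, h3, h4⟩ := hpos p
      have hWp : W p ≤ 18 * (m / μ) * (m / μ') := by
        simp only [hW]
        have q1 : (u p - f p)⁻¹ * (u p - f' p)⁻¹ ≤ (3 * (m / μ)) * (3 * (m / μ')) := by gcongr
        have q2 : (u p + f p)⁻¹ * (u p + f' p)⁻¹ ≤ (3 * (m / μ)) * (3 * (m / μ')) := by gcongr
        nlinarith
      have hψp := hBψ p
      have ht := hterm p
      have hfin : ψ t - ψ s = W p * ((f' - f) p * (B *ᵥ x) p) := by
        rw [hB] at hψp ⊢
        rw [Pi.sub_apply]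
        rcases hpo with ⟨e1, e2⟩ | ⟨e1, e2⟩ <;> rw [e1, e2] at hψp ⊢ <;> rw [hxs, hxt] <;> linarith
      rw [hfin]
      gcongr
    have hsum : (P.card : ℝ) * (ψ t - ψ s) ≤ (18 * (m / μ) * (m / μ')) * (μ - μ') := by
      calc (P.card : ℝ) * (ψ t - ψ s) = ∑ p ∈ P, (ψ t - ψ s) := by
            rw [Finset.sum_const, nsmul_eq_mul]
        _ ≤ ∑ p ∈ P, (18 * (m / μ) * (m / μ')) * ((f' - f) p * (B *ᵥ x) p) :=
          Finset.sum_le_sum hPterm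
        _ = (18 * (m / μ) * (m / μ')) * ∑ p ∈ P, (f' - f) p * (B *ᵥ x) p := by
          rw [Finset.mul_sum]
        _ ≤ (18 * (m / μ) * (m / μ')) * ∑ p, (f' - f) p * (B *ᵥ x) p := by
          apply mul_le_mul_of_nonneg_left _ (by positivity)
          exact Finset.sum_le_sum_of_subset_of_nonneg (Finset.subset_univ _) fun e _ _ => hterm e
        _ = _ := by rw [hp]
    have hcard' : m ≤ 2 * P.card := by rw [hm]; exact_mod_cast hcard
    have h1 : m * (ψ t - ψ s) ≤ m * (36 * m * (μ - μ') / (μ * μ')) := by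
      calc m * (ψ t - ψ s) ≤ 2 * P.card * (ψ t - ψ s) := by gcongr
        _ ≤ 2 * ((18 * (m / μ) * (m / μ')) * (μ - μ')) := by linarith
        _ = _ := by field_simp; ring
    rcases hm0.eq_or_lt with h | h
    · -- no edges: the sum is empty
      have hE : IsEmpty E := by
        rw [← Fintype.card_eq_zero_iff]
        have : (Fintype.card E : ℝ) = 0 := by rw [← hm]; exact h.symm
        exact_mod_cast this
      rw [← hT, ← h]; simp
    · have h2 := le_of_mul_le_mul_left h1 h
      calc (μ - μ') * (ψ t - ψ s) ≤ (μ - μ') * (36 * m * (μ - μ') / (μ * μ')) := by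
            apply mul_le_mul_of_nonneg_left h2; linarith
        _ = _ := by ring
  exact hgoal

theorem central_ratio [DecidableEq V] {head tail : E → V} {s t : V} (hst : s ≠ t) {B : Matrix E V ℝ}
    (hB : ∀ x e, (B *ᵥ x) e = x (head e) - x (tail e)) {χ : V → ℝ}
    (hχ : ∀ x : V → ℝ, χ ⬝ᵥ x = x t - x s) {u : E → ℝ} {U : ℝ} {P : Finset E}
    (hP : Preconditioned head tail s t u U P) {Fstar : ℝ}
    (hF : ∃ f : E → ℝ, (∀ e, |f e| ≤ u e) ∧ Bᵀ *ᵥ f = Fstar • χ) {μ μ' : ℝ} (hμ : 0 < μ)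
    (hμF : μ ≤ Fstar) (hμ' : 0 < μ') (hle : μ' ≤ μ)
    {f f' : E → ℝ} (hf : IsCentralFlow B u χ Fstar μ f) (hf' : IsCentralFlow B u χ Fstar μ' f')
    {T : ℝ} (hT : 36 * Fintype.card E * (μ - μ') ^ 2 / (μ * μ') ≤ T) (e : E) :
    resist u f' e ≤ (T + 2) ^ 2 * resist u f e ∧ resist u f e ≤ (T + 2) ^ 2 * resist u f' e := by
  have h := (central_T hst hB hχ hP hF hμ hμF hμ' hle hf hf').trans hT
  have h1 := abs_lt.1 (hf.1 e)
  have h2 := abs_lt.1 (hf'.1 e)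
  have a1 : 0 < u e - f e := by linarith [h1.2]
  have a2 : 0 < u e + f e := by linarith [h1.1]
  have a3 : 0 < u e - f' e := by linarith [h2.2]
  have a4 : 0 < u e + f' e := by linarith [h2.1]
  have hs : (f' e - f e) ^ 2 * ((u e - f e)⁻¹ * (u e - f' e)⁻¹ + (u e + f e)⁻¹ * (u e + f' e)⁻¹)
      ≤ T := by
    refine le_trans ?_ h
    refine Finset.single_le_sum (f := fun e => (f' e - f e) ^ 2 * ((u e - f e)⁻¹ * (u e - f' e)⁻¹
      + (u e + f e)⁻¹ * (u e + f' e)⁻¹)) (fun e _ => ?_) (Finset.mem_univ e)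
    have h1 := abs_lt.1 (hf.1 e)
    have h2 := abs_lt.1 (hf'.1 e)
    have a1 : 0 < u e - f e := by linarith [h1.2]
    have a2 : 0 < u e + f e := by linarith [h1.1]
    have a3 : 0 < u e - f' e := by linarith [h2.2]
    have a4 : 0 < u e + f' e := by linarith [h2.1]
    positivity
  have p1 : 0 ≤ (f' e - f e) ^ 2 * ((u e - f e)⁻¹ * (u e - f' e)⁻¹) := by positivity
  have p2 : 0 ≤ (f' e - f e) ^ 2 * ((u e + f e)⁻¹ * (u e + f' e)⁻¹) := by positivity
  rw [mul_add] at hs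
  have T0 : 0 ≤ T := by linarith
  obtain ⟨r1, r2⟩ := slack_ratio a1 a3 (T := T) (by
    rw [show u e - f e - (u e - f' e) = f' e - f e by ring]; linarith)
  obtain ⟨r3, r4⟩ := slack_ratio a2 a4 (T := T) (by
    rw [show (u e + f e - (u e + f' e)) ^ 2 = (f' e - f e) ^ 2 by ring]; linarith)
  exact ⟨resist_le a1 a2 a3 a4 (by linarith) r1 r3, resist_le a3 a4 a1 a2 (by linarith) r2 r4⟩

/-- Approximately centered flows are close to the central flow. -/
theorem center_close {B : Matrix E V ℝ} {χ : V → ℝ} {u : E → ℝ} {Fstar μ γ : ℝ}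
    (hγ : 0 ≤ γ) (hγ' : γ ≤ 1 / 1000) {f fc q : E → ℝ} {φ : V → ℝ} (hf : ∀ e, |f e| < u e)
    (hfc : IsCentralFlow B u χ Fstar μ fc)
    (hq : Bᵀ *ᵥ f - (Fstar - μ) • χ = Bᵀ *ᵥ q) (hqn : wn (resist u f) q ≤ γ)
    (hφ : wn (fun e => (resist u f e)⁻¹)
      (fun e => (B *ᵥ φ) e - ((u e - f e)⁻¹ - (u e + f e)⁻¹)) ≤ γ) :
    wn (resist u f) (fun e => f e - fc e) ≤ 14 * γ := by
  obtain ⟨hfe, hfr, φc, hφc⟩ := hfc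
  have hr := resist_pos hf
  have hr0 : ∀ e, 0 ≤ resist u f e := fun e => (hr e).le
  have hri0 : ∀ e, 0 ≤ (resist u f e)⁻¹ := fun e => inv_nonneg.2 (hr0 e)
  have hq1 : ∀ e, |-q e| ≤ γ * (u e - f e) ∧ |-q e| ≤ γ * (u e + f e) := fun e => by
    refine edge_close (hf e) hγ ?_
    have h1 := le_wn_sq hr0 q e
    rw [neg_sq]
    refine h1.trans ?_
    gcongr
    exact wn_nonneg _ _
  have hpos : ∀ e, 0 < u e - f e ∧ 0 < u e + f e := fun e => by
    have h1 := abs_lt.1 (hf e)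
    constructor <;> linarith [h1.1, h1.2]
  have hq2 : ∀ e, |-q e| ≤ 1 / 2 * (u e - f e) ∧ |-q e| ≤ 1 / 2 * (u e + f e) := fun e => by
    obtain ⟨h1, h2⟩ := hq1 e
    obtain ⟨h3, h4⟩ := hpos e
    constructor <;> nlinarith
  have hfh : ∀ e, |f e + -q e| < u e := fun e => by
    obtain ⟨h1, h2⟩ := hq2 e
    obtain ⟨h3, h4⟩ := hpos e
    rw [abs_le] at h1 h2
    rw [abs_lt]; constructor <;> linarith [h1.1, h1.2, h2.1, h2.2]
  set Δ : E → ℝ := fun e => (f e + -q e) - fc e with hΔ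
  set Z := wn (resist u f) Δ with hZ
  have hZ0 : 0 ≤ Z := wn_nonneg _ _
  set hh : E → ℝ := fun e => ((u e - (f e + -q e))⁻¹ - (u e + (f e + -q e))⁻¹) - (B *ᵥ φ) e with hhh
  have hhn : wn (fun e => (resist u f e)⁻¹) hh ≤ 3 * γ := by
    have e1 : hh = fun e => ((u e - (f e + -q e))⁻¹ - (u e + (f e + -q e))⁻¹ -
        ((u e - f e)⁻¹ - (u e + f e)⁻¹)) +
        -((B *ᵥ φ) e - ((u e - f e)⁻¹ - (u e + f e)⁻¹)) := by
      funext e; simp only [hhh]; ring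
    rw [e1]
    refine (wn_add hri0 _ _).trans ?_
    have h1 : wn (fun e => (resist u f e)⁻¹) (fun e => (u e - (f e + -q e))⁻¹ -
        (u e + (f e + -q e))⁻¹ - ((u e - f e)⁻¹ - (u e + f e)⁻¹)) ≤ 2 * wn (resist u f) q := by
      refine wn_le (by norm_num) hr0 fun e => ?_
      have := edge_taylor_zero (hf e) (hq2 e)
      rw [neg_sq] at this
      exact this
    have h2 : wn (fun e => (resist u f e)⁻¹)
        (fun e => -((B *ᵥ φ) e - ((u e - f e)⁻¹ - (u e + f e)⁻¹))) ≤ γ := by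
      refine le_trans (le_of_eq ?_) hφ
      simp only [wn, neg_sq]
    linarith
  have hΔr : Bᵀ *ᵥ Δ = 0 := by
    have : Δ = f - q - fc := by funext e; simp [hΔ]; ring
    rw [this, Matrix.mulVec_sub, Matrix.mulVec_sub, ← hq, hfr]; simp
  have hup : ∑ e, Δ e * (((u e - (f e + -q e))⁻¹ - (u e + (f e + -q e))⁻¹) -
      ((u e - fc e)⁻¹ - (u e + fc e)⁻¹)) ≤ 3 * γ * Z := by
    have h0 : ∑ e, Δ e * (B *ᵥ (φ - φc)) e = 0 := by
      rw [← dot_BT, hΔr, zero_dotProduct]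
    have h1 : ∑ e, Δ e * (((u e - (f e + -q e))⁻¹ - (u e + (f e + -q e))⁻¹) -
      ((u e - fc e)⁻¹ - (u e + fc e)⁻¹)) = ∑ e, hh e * Δ e := by
      rw [← add_zero (∑ e, hh e * Δ e), ← h0, ← Finset.sum_add_distrib]
      refine Finset.sum_congr rfl fun e _ => ?_
      rw [Matrix.mulVec_sub, Pi.sub_apply, hφc]
      simp only [hhh]; ring
    rw [h1]
    refine (wn_cs hr _ _).trans ?_
    gcongr
  have hlow : Z ^ 2 / (2 * (2 + Z)) ≤ ∑ e, Δ e * (((u e - (f e + -q e))⁻¹ -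
      (u e + (f e + -q e))⁻¹) - ((u e - fc e)⁻¹ - (u e + fc e)⁻¹)) := by
    rw [hZ, wn_sq hr0, ← hZ, Finset.sum_div]
    refine Finset.sum_le_sum fun e _ => ?_
    rw [edge_mono (hfe e) (hfh e)]
    obtain ⟨h3, h4⟩ := hpos e
    obtain ⟨c1, c2⟩ := edge_close (d := Δ e) (hf e) hZ0 (le_wn_sq hr0 Δ e)
    obtain ⟨h1, h2⟩ := hq2 e
    rw [abs_le] at h1 h2 c1 c2
    have hfe' := abs_lt.1 (hfe e)
    have hfh' := abs_lt.1 (hfh e)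
    have hd : Δ e = (f e + -q e) - fc e := rfl
    have key : ∀ a x y : ℝ, 0 < a → 0 < x → 0 < y → x ≤ 2 * a → y ≤ (2 + Z) * a →
        (a ^ 2)⁻¹ / (2 * (2 + Z)) ≤ y⁻¹ * x⁻¹ := by
      intro a x y ha hx hy hxa hya
      rw [← mul_inv, div_eq_mul_inv, ← mul_inv]
      apply inv_anti₀ (by positivity)
      calc y * x ≤ ((2 + Z) * a) * (2 * a) := by gcongr
        _ = _ := by ring
    have k1 := key (u e - f e) (u e - (f e + -q e)) (u e - fc e) h3 (by linarith [hfh'.2])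
      (by linarith [hfe'.2]) (by linarith [h1.1]) (by linarith [h1.1, c1.2])
    have k2 := key (u e + f e) (u e + (f e + -q e)) (u e + fc e) h4 (by linarith [hfh'.1])
      (by linarith [hfe'.1]) (by linarith [h2.2]) (by linarith [h2.2, c2.1])
    rw [resist, ← hd]
    calc (((u e - f e) ^ 2)⁻¹ + ((u e + f e) ^ 2)⁻¹) * Δ e ^ 2 / (2 * (2 + Z))
        = (((u e - f e) ^ 2)⁻¹ / (2 * (2 + Z)) + ((u e + f e) ^ 2)⁻¹ / (2 * (2 + Z))) * Δ e ^ 2 := by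
          ring
      _ ≤ ((u e - fc e)⁻¹ * (u e - (f e + -q e))⁻¹ + (u e + fc e)⁻¹ * (u e + (f e + -q e))⁻¹)
          * Δ e ^ 2 := by gcongr
      _ = _ := by ring
  have hZle : Z ≤ 13 * γ := by
    have h1 := hlow.trans hup
    rw [div_le_iff₀ (by positivity)] at h1
    rcases hZ0.eq_or_lt with h | h
    · rw [← h]; positivity
    · have : Z * Z ≤ Z * (6 * γ * (2 + Z)) := by linarith
      have := le_of_mul_le_mul_left this h
      nlinarith
  have e2 : (fun e => f e - fc e) = fun e => Δ e + q e := by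
    funext e; simp only [hΔ]; ring
  rw [e2]
  refine (wn_add hr0 _ _).trans ?_
  linarith

end graph

/-! Assembly -/
section main
variable {V E : Type*} [Fintype V] [Fintype E]

theorem energy_bound [DecidableEq V] [DecidableEq E] {head tail : E → V} {s t : V} (hst : s ≠ t)
    {B : Matrix E V ℝ}
    (hB : ∀ x e, (B *ᵥ x) e = x (head e) - x (tail e)) {χ : V → ℝ}
    (hχ : ∀ x : V → ℝ, χ ⬝ᵥ x = x t - x s) {u : E → ℝ} {U : ℝ} {P : Finset E}
    (hP : Preconditioned head tail s t u U P) {Fstar : ℝ}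
    (hF : ∃ f : E → ℝ, (∀ e, |f e| ≤ u e) ∧ Bᵀ *ᵥ f = Fstar • χ) {μ μ' : ℝ} (hμ : 0 < μ)
    (hμμ : 9 / 10 * μ ≤ μ') (hμF : μ' ≤ Fstar) {f fc : E → ℝ}
    (hfc : IsCentralFlow B u χ Fstar μ' fc) (hf : ∀ e, |f e| < u e)
    (hm : 0 < (Fintype.card E : ℝ))
    (hrr : ∀ e, resist u f e ≤ 5 / 4 * resist u fc e) :
    ∃ y : E → ℝ, Bᵀ *ᵥ y = χ ∧ wn (resist u f) y ≤ 10 * Real.sqrt (Fintype.card E) / μ := by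
  have hμ' : 0 < μ' := by linarith
  have b := prec_bound hst hB hχ hP hF hμ' hμF hfc
  obtain ⟨hU, hPe, hnP, hcard⟩ := hP
  have hcard' : (Fintype.card E : ℝ) ≤ 2 * P.card := by exact_mod_cast hcard
  set m : ℝ := (Fintype.card E : ℝ) with hm'
  have hP0 : 0 < (P.card : ℝ) := by linarith
  refine ⟨fun e => if e ∈ P then (if head e = t then 1 else -1) / (P.card : ℝ) else 0, ?_, ?_⟩
  · apply dotProduct_eq
    intro x
    rw [dot_BT, hχ]
    have : ∀ e, (if e ∈ P then (if head e = t then (1 : ℝ) else -1) / (P.card : ℝ) else 0) *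
        (B *ᵥ x) e = if e ∈ P then (x t - x s) / P.card else 0 := by
      intro e
      by_cases he : e ∈ P
      · rw [if_pos he, if_pos he, hB]
        obtain ⟨-, ⟨h1, h2⟩ | ⟨h1, h2⟩⟩ := hPe e he
        · rw [h1, h2, if_neg hst]; ring
        · rw [h1, h2, if_pos rfl]; ring
      · rw [if_neg he, if_neg he, zero_mul]
    simp only [this]
    rw [Finset.sum_ite_mem, Finset.univ_inter, Finset.sum_const, nsmul_eq_mul]
    field_simp
  · rw [wn]
    refine Real.sqrt_le_iff.2 ⟨by positivity, ?_⟩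
    have h1 : ∀ e, resist u f e * (if e ∈ P then (if head e = t then (1 : ℝ) else -1) /
        (P.card : ℝ) else 0) ^ 2 ≤ if e ∈ P then 45 / 2 * (m / μ') ^ 2 / (P.card : ℝ) ^ 2 else 0 := by
      intro e
      by_cases he : e ∈ P
      · rw [if_pos he, if_pos he, div_pow]
        have : (if head e = t then (1 : ℝ) else -1) ^ 2 = 1 := by split_ifs <;> norm_num
        rw [this, mul_one_div]
        gcongr
        refine (hrr e).trans ?_
        obtain ⟨b1, b2⟩ := b e he
        have h1 := abs_lt.1 (hfc.1 e)
        have a1 : 0 < u e - fc e := by linarith [h1.2]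
        have a2 : 0 < u e + fc e := by linarith [h1.1]
        have c1 : (u e - fc e)⁻¹ ^ 2 ≤ (3 * (m / μ')) ^ 2 := by gcongr
        have c2 : (u e + fc e)⁻¹ ^ 2 ≤ (3 * (m / μ')) ^ 2 := by gcongr
        rw [resist, ← inv_pow, ← inv_pow]
        nlinarith
      · rw [if_neg he, if_neg he]; simp
    refine (Finset.sum_le_sum fun e _ => h1 e).trans ?_
    rw [Finset.sum_ite_mem, Finset.univ_inter, Finset.sum_const, nsmul_eq_mul]
    have h2 : (P.card : ℝ) * (45 / 2 * (m / μ') ^ 2 / (P.card : ℝ) ^ 2) =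
        45 / 2 * (m / μ') ^ 2 / (P.card : ℝ) := by field_simp
    have hm2 : Real.sqrt m ^ 2 = m := Real.sq_sqrt hm.le
    rw [h2, div_pow (10 * Real.sqrt m), mul_pow, hm2, div_le_iff₀ hP0]
    have h3 : (m / μ') ^ 2 ≤ (m / (9 / 10 * μ)) ^ 2 := by gcongr
    calc 45 / 2 * (m / μ') ^ 2 ≤ 45 / 2 * (m / (9 / 10 * μ)) ^ 2 := by gcongr
      _ = (45 / 2 / (81 / 100)) * m / μ ^ 2 * m := by field_simp; ring
      _ ≤ (45 / 2 / (81 / 100)) * m / μ ^ 2 * (2 * P.card) := by gcongr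
      _ ≤ 10 ^ 2 * m / μ ^ 2 * P.card := by
        have : 0 ≤ m / μ ^ 2 * P.card := by positivity
        rw [show (45 / 2 / (81 / 100)) * m / μ ^ 2 * (2 * P.card) =
          (45 / (81 / 100)) * (m / μ ^ 2 * P.card) by ring,
          show 10 ^ 2 * m / μ ^ 2 * P.card = 100 * (m / μ ^ 2 * P.card) by ring]
        gcongr
        norm_num

theorem step_full [Nonempty V] [DecidableEq V] [DecidableEq E] (B : Matrix E V ℝ) {u f f' : E → ℝ}
    (hf : ∀ e, |f e| < u e)
    (hker : ∀ x : V → ℝ, lapOf B u f *ᵥ x = 0 ↔ ∃ c' : ℝ, x = fun _ => c')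
    (hB1 : ∀ c' : ℝ, B *ᵥ (fun _ => c') = 0)
    {χ : V → ℝ} {y : E → ℝ} (hy : Bᵀ *ᵥ y = χ) {K : ℝ} (hK : wn (resist u f) y ≤ K)
    {ε τ : ℝ} (hε : 0 ≤ ε) (hε' : ε ≤ 1 / 1000) (hτ : 0 ≤ τ) (hτK : τ * K = 10 * ε)
    {rt : E → ℝ} {Lt Ltd : Matrix V V ℝ}
    (hrt : ∀ e, Real.exp (-ε) * resist u f e ≤ rt e ∧ rt e ≤ Real.exp ε * resist u f e)
    (hpsd : Lt.PosSemidef)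
    (hkt : ∀ x : V → ℝ, Lt *ᵥ x = 0 ↔ ∃ c' : ℝ, x = fun _ => c')
    (hl1 : (Lt - Real.exp (-ε) • lapOf B u f).PosSemidef)
    (hl2 : (Real.exp ε • lapOf B u f - Lt).PosSemidef)
    (hMP : IsMoorePenrose Lt Ltd)
    (hf' : f' = f + τ • fun e => (rt e)⁻¹ * (B *ᵥ (Ltd *ᵥ χ)) e) :
    (∀ e, |f' e| < u e) ∧
    (∀ e, resist u f' e ≤ 2 * resist u f e ∧ resist u f e ≤ 2 * resist u f' e) ∧
    (∃ q : E → ℝ, Bᵀ *ᵥ f' - Bᵀ *ᵥ f - τ • χ = Bᵀ *ᵥ q ∧ wn (resist u f) q ≤ 320 * ε ^ 2) ∧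
    (∃ ψ : V → ℝ, wn (fun e => (resist u f e)⁻¹) (fun e => (B *ᵥ ψ) e -
      (((u e - f' e)⁻¹ - (u e + f' e)⁻¹) - ((u e - f e)⁻¹ - (u e + f e)⁻¹))) ≤ 320 * ε ^ 2) := by
  obtain ⟨s1, ⟨q, s2, s3⟩, s4⟩ := step_lemma B hf hker hB1 hy hK hε (by linarith) hrt hpsd hkt hl1
    hl2 hMP
  have hr := resist_pos hf
  have hr0 : ∀ e, 0 ≤ resist u f e := fun e => (hr e).le
  have hri0 : ∀ e, 0 ≤ (resist u f e)⁻¹ := fun e => inv_nonneg.2 (hr0 e)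
  set x := B *ᵥ (Ltd *ᵥ χ) with hx
  set δ : E → ℝ := fun e => τ * ((rt e)⁻¹ * x e) with hδ
  have hf'e : ∀ e, f' e = f e + δ e := fun e => by rw [hf']; simp [hδ]
  have scale : ∀ (w : E → ℝ) (g : E → ℝ), (∀ e, 0 ≤ w e) → wn w (fun e => τ * g e) ≤ τ * wn w g :=
    fun w g hw => wn_le hτ hw fun e => le_of_eq (by ring)
  have hD : wn (resist u f) δ ≤ 12 * ε := by
    refine (scale _ _ hr0).trans ?_
    have := mul_le_mul_of_nonneg_left s1 hτ
    linarith
  have hD0 := wn_nonneg (resist u f) δ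
  have hcl : ∀ e, |δ e| ≤ 12 * ε * (u e - f e) ∧ |δ e| ≤ 12 * ε * (u e + f e) := fun e => by
    refine edge_close (hf e) (by linarith) ((le_wn_sq hr0 δ e).trans ?_)
    gcongr
  have hpos : ∀ e, 0 < u e - f e ∧ 0 < u e + f e := fun e => by
    have h1 := abs_lt.1 (hf e)
    constructor <;> linarith [h1.1, h1.2]
  have hcl' : ∀ e, |δ e| ≤ 1 / 10 * (u e - f e) ∧ |δ e| ≤ 1 / 10 * (u e + f e) := fun e => by
    obtain ⟨h1, h2⟩ := hcl e
    obtain ⟨h3, h4⟩ := hpos e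
    constructor <;> nlinarith
  refine ⟨fun e => ?_, fun e => ?_, ⟨fun e => τ * q e, ?_, ?_⟩, ⟨τ • (Ltd *ᵥ χ), ?_⟩⟩
  · obtain ⟨h1, h2⟩ := hcl' e
    obtain ⟨h3, h4⟩ := hpos e
    rw [abs_le] at h1 h2
    rw [hf'e, abs_lt]; constructor <;> linarith [h1.1, h1.2, h2.1, h2.2]
  · obtain ⟨h1, h2⟩ := hcl' e
    obtain ⟨h3, h4⟩ := hpos e
    rw [abs_le] at h1 h2
    obtain ⟨h1a, h1b⟩ := h1
    obtain ⟨h2a, h2b⟩ := h2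
    have r1 := resist_le (a := u e - f e) (b := u e + f e) (a' := u e - f' e) (b' := u e + f' e)
      (M := 10 / 9) h3 h4 (by rw [hf'e]; linarith) (by rw [hf'e]; linarith) (by norm_num)
      (by rw [hf'e]; linarith) (by rw [hf'e]; linarith)
    have r2 := resist_le (a' := u e - f e) (b' := u e + f e) (a := u e - f' e) (b := u e + f' e)
      (M := 11 / 10) (by rw [hf'e]; linarith) (by rw [hf'e]; linarith) h3 h4 (by norm_num)
      (by rw [hf'e]; linarith) (by rw [hf'e]; linarith)
    have p1 := hr e
    have p2 : 0 ≤ resist u f' e := by rw [resist]; positivity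
    rw [resist] at p1 p2
    simp only [resist]
    constructor
    · nlinarith
    · nlinarith
  · have e1 : (fun e => τ * q e) = τ • q := rfl
    rw [e1, Matrix.mulVec_smul, ← s2, hf', Matrix.mulVec_add, Matrix.mulVec_smul, smul_sub]
    abel
  · refine (scale _ _ hr0).trans ?_
    have := mul_le_mul_of_nonneg_left s3 hτ
    nlinarith
  · have e1 : (fun e => (B *ᵥ (τ • (Ltd *ᵥ χ))) e -
        (((u e - f' e)⁻¹ - (u e + f' e)⁻¹) - ((u e - f e)⁻¹ - (u e + f e)⁻¹))) =
        fun e => -((u e - (f e + δ e))⁻¹ - (u e + (f e + δ e))⁻¹ - ((u e - f e)⁻¹ - (u e + f e)⁻¹)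
          - resist u f e * δ e) + -(τ * (resist u f e * ((rt e)⁻¹ * x e) - x e)) := by
      funext e
      rw [Matrix.mulVec_smul, ← hx, hf'e]
      simp only [Pi.smul_apply, smul_eq_mul, hδ]
      ring
    have hneg : ∀ g : E → ℝ, wn (fun e => (resist u f e)⁻¹) (fun e => -g e) =
        wn (fun e => (resist u f e)⁻¹) g := fun g => by simp only [wn, neg_sq]
    rw [e1]
    refine (wn_add hri0 _ _).trans ?_
    rw [hneg, hneg]
    have t1 : wn (fun e => (resist u f e)⁻¹) (fun e => (u e - (f e + δ e))⁻¹ -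
        (u e + (f e + δ e))⁻¹ - ((u e - f e)⁻¹ - (u e + f e)⁻¹) - resist u f e * δ e) ≤
        (2 * wn (resist u f) δ) * wn (resist u f) δ := by
      refine wn_le (by positivity) hr0 fun e => ?_
      have h1 : |δ e| ≤ 1 / 2 * (u e - f e) ∧ |δ e| ≤ 1 / 2 * (u e + f e) := by
        obtain ⟨h1, h2⟩ := hcl' e
        obtain ⟨h3, h4⟩ := hpos e
        constructor <;> linarith
      refine (edge_taylor_one (hf e) h1).trans ?_
      have h2 := le_wn_sq hr0 δ e
      have h3 : 0 ≤ resist u f e * δ e ^ 2 := mul_nonneg (hr0 e) (sq_nonneg _)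
      change 4 * (resist u f e * δ e ^ 2) ^ 2 ≤ _
      nlinarith
    have t2 := scale _ (fun e => resist u f e * ((rt e)⁻¹ * x e) - x e) hri0
    have t3 := mul_le_mul_of_nonneg_left s4 hτ
    have t4 : wn (resist u f) δ * wn (resist u f) δ ≤ (12 * ε) * (12 * ε) := by gcongr
    nlinarith

theorem acc_flow {B : Matrix E V ℝ} {χ : V → ℝ} {F A ρ : ℝ} (hA : 0 ≤ A) (hρ : 0 ≤ ρ)
    {f : ℕ → E → ℝ} {μi : ℕ → ℝ} {r : ℕ → E → ℝ} {w : E → ℝ} (hw : ∀ e, 0 ≤ w e)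
    (h0 : Bᵀ *ᵥ f 0 = (F - μi 0) • χ) (n : ℕ) (hr : ∀ j < n, ∀ e, 0 ≤ r j e)
    (hstep : ∀ j < n, ∃ q : E → ℝ, Bᵀ *ᵥ f (j + 1) - Bᵀ *ᵥ f j - (μi j - μi (j + 1)) • χ = Bᵀ *ᵥ q ∧
      wn (r j) q ≤ A) (hwr : ∀ j < n, ∀ e, w e ≤ ρ ^ 2 * r j e) :
    ∃ q : E → ℝ, Bᵀ *ᵥ f n - (F - μi n) • χ = Bᵀ *ᵥ q ∧ wn w q ≤ n * (ρ * A) := by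
  induction n with
  | zero => exact ⟨0, by rw [h0]; simp, by simp [wn]⟩
  | succ n ih =>
    obtain ⟨q, q1, q2⟩ := ih (fun j hj => hr j (by omega)) (fun j hj => hstep j (by omega))
      (fun j hj => hwr j (by omega))
    obtain ⟨q', q1', q2'⟩ := hstep n (by omega)
    refine ⟨fun e => q e + q' e, ?_, ?_⟩
    · have : (fun e => q e + q' e) = q + q' := rfl
      rw [this, Matrix.mulVec_add, ← q1, ← q1', sub_smul, sub_smul, sub_smul]
      abel
    · refine (wn_add hw _ _).trans ?_
      have h1 : wn w q' ≤ ρ * wn (r n) q' := wn_le hρ (hr n (by omega)) fun e => by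
        rw [← mul_assoc]
        exact mul_le_mul_of_nonneg_right (hwr n (by omega) e) (sq_nonneg _)
      have h2 := mul_le_mul_of_nonneg_left q2' hρ
      push_cast; linarith

theorem acc_grad {B : Matrix E V ℝ} {A ρ : ℝ} (hA : 0 ≤ A) (hρ : 0 ≤ ρ)
    {g : ℕ → E → ℝ} {r : ℕ → E → ℝ} {w : E → ℝ} (hw : ∀ e, 0 ≤ w e)
    (h0 : ∃ φ : V → ℝ, ∀ e, (B *ᵥ φ) e = g 0 e) (n : ℕ) (hr : ∀ j < n, ∀ e, 0 ≤ r j e)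
    (hstep : ∀ j < n, ∃ ψ : V → ℝ, wn (r j) (fun e => (B *ᵥ ψ) e - (g (j + 1) e - g j e)) ≤ A)
    (hwr : ∀ j < n, ∀ e, w e ≤ ρ ^ 2 * r j e) :
    ∃ φ : V → ℝ, wn w (fun e => (B *ᵥ φ) e - g n e) ≤ n * (ρ * A) := by
  induction n with
  | zero =>
    obtain ⟨φ, hφ⟩ := h0
    exact ⟨φ, by simp [wn, hφ]⟩
  | succ n ih =>
    obtain ⟨φ, q2⟩ := ih (fun j hj => hr j (by omega)) (fun j hj => hstep j (by omega))
      (fun j hj => hwr j (by omega))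
    obtain ⟨ψ, q2'⟩ := hstep n (by omega)
    refine ⟨φ + ψ, ?_⟩
    have e1 : (fun e => (B *ᵥ (φ + ψ)) e - g (n + 1) e) =
        fun e => (fun e => (B *ᵥ φ) e - g n e) e +
          (fun e => (B *ᵥ ψ) e - (g (n + 1) e - g n e)) e := by
      funext e; rw [Matrix.mulVec_add, Pi.add_apply]; ring
    rw [e1]
    refine (wn_add hw _ _).trans ?_
    have h1 : wn w (fun e => (B *ᵥ ψ) e - (g (n + 1) e - g n e)) ≤
        ρ * wn (r n) (fun e => (B *ᵥ ψ) e - (g (n + 1) e - g n e)) :=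
      wn_le hρ (hr n (by omega)) fun e => by
        rw [← mul_assoc]
        exact mul_le_mul_of_nonneg_right (hwr n (by omega) e) (sq_nonneg _)
    have h2 := mul_le_mul_of_nonneg_left q2' hρ
    push_cast; linarith

theorem exp_bounds : Real.exp (-(0.2 : ℝ)) ≤ 5 / 6 ∧ 6 / 5 ≤ Real.exp 0.2 ∧
    4 / 5 ≤ Real.exp (-(0.2 : ℝ)) ∧ Real.exp 0.2 ≤ 5 / 4 := by
  have h1 := Real.add_one_le_exp (0.2 : ℝ)
  have h2 := Real.add_one_le_exp (-(0.2 : ℝ))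
  have h3 : Real.exp (-(0.2 : ℝ)) * Real.exp 0.2 = 1 := by rw [← Real.exp_add]; simp
  have h4 := Real.exp_pos (0.2 : ℝ)
  have h5 := Real.exp_pos (-(0.2 : ℝ))
  norm_num at h1 h2 h3 h4 h5 ⊢
  refine ⟨?_, by linarith, by linarith, ?_⟩ <;> nlinarith

theorem final_goal [Nonempty V] [DecidableEq V] [DecidableEq E] {B : Matrix E V ℝ} {χ : V → ℝ}
    {u : E → ℝ} {Fstar μ γ : ℝ}
    (hγ : 0 ≤ γ) (hγ' : γ ≤ 1 / 10000) {f fc q : E → ℝ} {φ : V → ℝ} (hf : ∀ e, |f e| < u e)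
    (hker : ∀ x : V → ℝ, lapOf B u f *ᵥ x = 0 ↔ ∃ c' : ℝ, x = fun _ => c')
    (hB1 : ∀ c' : ℝ, B *ᵥ (fun _ => c') = 0)
    (hfc : IsCentralFlow B u χ Fstar μ fc)
    (hq : Bᵀ *ᵥ f - (Fstar - μ) • χ = Bᵀ *ᵥ q) (hqn : wn (resist u f) q ≤ γ)
    (hφ : wn (fun e => (resist u f e)⁻¹)
      (fun e => (B *ᵥ φ) e - ((u e - f e)⁻¹ - (u e + f e)⁻¹)) ≤ γ) :
    (∀ e, |f e| < u e) ∧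
    IsCenteredFlow B u χ Fstar (1 / 1000) μ f ∧
    (∀ e, Real.sqrt (resist u f e) * |f e - fc e| ≤ 0.1) ∧
    (∀ e, Real.exp (-(0.2 : ℝ)) * resist u fc e ≤ resist u f e ∧
      resist u f e ≤ Real.exp 0.2 * resist u fc e) := by
  have hr := resist_pos hf
  have hr0 : ∀ e, 0 ≤ resist u f e := fun e => (hr e).le
  have hcl := center_close hγ (by linarith) hf hfc hq hqn hφ
  have hd : ∀ e, resist u f e * (f e - fc e) ^ 2 ≤ (1 / 500) ^ 2 := fun e => by
    refine (le_wn_sq hr0 (fun e => f e - fc e) e).trans ?_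
    gcongr
    · exact wn_nonneg _ _
    · linarith
  refine ⟨hf, ?_, ?_, ?_⟩
  · obtain ⟨Ld, hLd⟩ := exists_mp _ (lap_symm B u f)
    refine ⟨Ld, hLd, ?_, φ, ?_⟩
    · rw [hq]
      exact (mp_norm_le B hf hker hB1 hLd q).trans (by linarith)
    · exact le_trans hφ (by linarith)
  · intro e
    have h1 : (Real.sqrt (resist u f e) * |f e - fc e|) ^ 2 ≤ (1 / 500) ^ 2 := by
      rw [mul_pow, Real.sq_sqrt (hr0 e), sq_abs]; exact hd e
    have := (abs_le_of_sq_le_sq' h1 (by norm_num)).2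
    norm_num at this ⊢
    linarith
  · intro e
    obtain ⟨c1, c2⟩ := edge_close (hf e) (by norm_num) (hd e)
    rw [abs_le] at c1 c2
    obtain ⟨c1a, c1b⟩ := c1
    obtain ⟨c2a, c2b⟩ := c2
    have h1 := abs_lt.1 (hf e)
    have h2 := abs_lt.1 (hfc.1 e)
    have a1 : 0 < u e - f e := by linarith [h1.2]
    have a2 : 0 < u e + f e := by linarith [h1.1]
    have a3 : 0 < u e - fc e := by linarith [h2.2]
    have a4 : 0 < u e + fc e := by linarith [h2.1]
    have r1 := resist_le (M := 101 / 100) a1 a2 a3 a4 (by norm_num) (by linarith) (by linarith)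
    have r2 := resist_le (M := 101 / 100) a3 a4 a1 a2 (by norm_num) (by linarith) (by linarith)
    obtain ⟨x1, x2, x3, x4⟩ := exp_bounds
    have p1 := hr e
    have p2 := resist_pos hfc.1 e
    change resist u fc e ≤ _ * resist u f e at r1
    change resist u f e ≤ _ * resist u fc e at r2
    constructor
    · calc Real.exp (-(0.2 : ℝ)) * resist u fc e ≤ 5 / 6 * resist u fc e := by gcongr
        _ ≤ _ := by linarith
    · calc resist u f e ≤ 6 / 5 * resist u fc e := by linarith
        _ ≤ _ := by gcongr

end main

/-- Lemma `cdmaintain`: there is an absolute constant `c ∈ (0,1)` so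
that, with `ε_step = ε_solve = c k⁻³`, iterating damped electric-flow steps computed with
`ε_solve`-approximate resistances and solvers from the central flow `f(μ)` keeps every
iterate `f⁽ⁱ⁾` strictly feasible, `1/1000`-centered for `μ⁽ⁱ⁾ = μ − (i ε_step/√m)μ`,
within `ℓ_∞` distance `0.1` of `f(μ⁽ⁱ⁾)` in the `R(f⁽ⁱ⁾)^{1/2}` metric, and with
resistances within `e^{±0.2}` of those of `f(μ⁽ⁱ⁾)`, for all `0 ≤ i ≤ k/ε_step`. -/
theorem damped_steps_stay_centered :
    ∃ c : ℝ, 0 < c ∧ c < 1 ∧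
      ∀ (V E : Type) [Fintype V] [Fintype E] [DecidableEq V] [DecidableEq E]
        (head tail : E → V) (s t : V), s ≠ t →
        ∀ u : E → ℝ, (∀ e, 0 < u e) →
        ∀ B : Matrix E V ℝ,
          (∀ e v, B e v =
            (if v = head e then (1 : ℝ) else 0) - (if v = tail e then 1 else 0)) →
        ∀ χst : V → ℝ,
          (χst = fun v => (if v = t then (1 : ℝ) else 0) - (if v = s then 1 else 0)) →
        (∀ x : V → ℝ, (∀ e, x (head e) = x (tail e)) → ∀ v w, x v = x w) →
        ∀ Fstar : ℝ,
          IsGreatest {F : ℝ | ∃ f : E → ℝ, (∀ e, |f e| ≤ u e) ∧ Bᵀ *ᵥ f = F • χst} Fstar →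
        ∀ (U : ℝ) (P : Finset E), Preconditioned head tail s t u U P →
        ∀ μ : ℝ, 0 < μ → μ ≤ Fstar →
        ∀ k : ℝ, 1 ≤ k → k ≤ Real.sqrt (Fintype.card E) / 10 →
        ∀ εstep εsolve : ℝ, εstep = c / k ^ 3 → εsolve = c / k ^ 3 →
        ∀ (f rt : ℕ → E → ℝ) (Lt Ltd : ℕ → Matrix V V ℝ) (fc : ℕ → E → ℝ) (μi : ℕ → ℝ),
          (∀ i : ℕ, μi i = μ - (i * εstep / Real.sqrt (Fintype.card E)) * μ) →
          (∀ i : ℕ, (i : ℝ) ≤ k / εstep → 0 < μi i) →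
          (∀ i : ℕ, (i : ℝ) ≤ k / εstep → IsCentralFlow B u χst Fstar (μi i) (fc i)) →
          f 0 = fc 0 →
          (∀ i : ℕ, (i : ℝ) < k / εstep →
            (∀ e, Real.exp (-εsolve) * resist u (f i) e ≤ rt i e ∧
              rt i e ≤ Real.exp εsolve * resist u (f i) e) ∧
            (Lt i).PosSemidef ∧
            (∀ x : V → ℝ, Lt i *ᵥ x = 0 ↔ ∃ c' : ℝ, x = fun _ => c') ∧
            (Lt i - Real.exp (-εsolve) • lapOf B u (f i)).PosSemidef ∧
            (Real.exp εsolve • lapOf B u (f i) - Lt i).PosSemidef ∧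
            IsMoorePenrose (Lt i) (Ltd i) ∧
            f (i + 1) = f i + (εstep * μ / Real.sqrt (Fintype.card E)) •
              fun e => (rt i e)⁻¹ * (B *ᵥ (Ltd i *ᵥ χst)) e) →
          ∀ i : ℕ, (i : ℝ) ≤ k / εstep →
            (∀ e, |f i e| < u e) ∧
            IsCenteredFlow B u χst Fstar (1 / 1000) (μi i) (f i) ∧
            (∀ e, Real.sqrt (resist u (f i) e) * |f i e - fc i e| ≤ 0.1) ∧
            (∀ e, Real.exp (-(0.2 : ℝ)) * resist u (fc i) e ≤ resist u (f i) e ∧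
              resist u (f i) e ≤ Real.exp 0.2 * resist u (fc i) e) := by
  refine ⟨1 / 10 ^ 9, by norm_num, by norm_num, ?_⟩
  intro V E _ _ _ _ head tail s t hst u hu B hBdef χ hχdef hconn Fstar hFs U P hP μ hμ hμF k hk hkm
    εstep εsolve hεstep hεsolve f rt Lt Ltd fc μi hμi hμpos hfc hf0 hstep
  have hV : Nonempty V := ⟨s⟩
  have hB : ∀ (x : V → ℝ) e, (B *ᵥ x) e = x (head e) - x (tail e) := by
    intro x e
    simp only [Matrix.mulVec, dotProduct, hBdef, sub_mul, ite_mul, one_mul, zero_mul,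
      Finset.sum_sub_distrib, Finset.sum_ite_eq', Finset.sum_ite_eq, Finset.mem_univ, if_true]
  have hχ : ∀ x : V → ℝ, χ ⬝ᵥ x = x t - x s := by
    intro x
    simp only [hχdef, dotProduct, sub_mul, ite_mul, one_mul, zero_mul,
      Finset.sum_sub_distrib, Finset.sum_ite_eq', Finset.sum_ite_eq, Finset.mem_univ, if_true]
  have hB1 : ∀ c' : ℝ, B *ᵥ (fun _ => c') = 0 := by
    intro c'; funext e; rw [hB]; simp
  have hF := hFs.1
  have hεε : εsolve = εstep := by rw [hεstep, hεsolve]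
  subst hεε
  clear hεsolve
  set ε := εsolve with hεdef
  have hk0 : 0 < k := by linarith
  have hε0 : 0 < ε := by rw [hεstep]; positivity
  have hk3 : 1 ≤ k ^ 3 := one_le_pow₀ hk
  have hkε : k ^ 3 * ε = 1 / 10 ^ 9 := by rw [hεstep]; field_simp
  have hε1 : ε ≤ 1 / 1000 := by nlinarith
  set sm := Real.sqrt (Fintype.card E) with hsm
  have hsm10 : 10 * k ≤ sm := by linarith
  have hsm0 : 0 < sm := by linarith
  have hsm2 : sm ^ 2 = Fintype.card E := Real.sq_sqrt (Nat.cast_nonneg _)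
  have hm0 : 0 < (Fintype.card E : ℝ) := by rw [← hsm2]; positivity
  set τ := ε * μ / sm with hτ
  have hτ0 : 0 ≤ τ := by positivity
  have hdiff : ∀ i, μi i - μi (i + 1) = τ := by
    intro i; rw [hμi, hμi, hτ]; push_cast; ring
  have hiε : ∀ i : ℕ, (i : ℝ) ≤ k / ε → i * ε ≤ k := fun i hi => by
    rwa [le_div_iff₀ hε0] at hi
  have hsub : ∀ i, μ - μi i = i * ε / sm * μ := fun i => by rw [hμi]; ring
  have hμlow : ∀ i : ℕ, (i : ℝ) ≤ k / ε → 9 / 10 * μ ≤ μi i := by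
    intro i hi
    have h1 : i * ε / sm ≤ 1 / 10 := by
      rw [div_le_iff₀ hsm0]; linarith [hiε i hi]
    have := hsub i
    nlinarith
  have hμmono : ∀ i j : ℕ, i ≤ j → μi j ≤ μi i := by
    intro i j hij
    have : (i : ℝ) * ε / sm * μ ≤ j * ε / sm * μ := by gcongr
    linarith [hsub i, hsub j]
  have hμiF : ∀ i, μi i ≤ Fstar := fun i => by
    have : 0 ≤ (i : ℝ) * ε / sm * μ := by positivity
    linarith [hsub i]
  have hratio : ∀ i j : ℕ, j ≤ i → (i : ℝ) ≤ k / ε → ∀ e,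
      resist u (fc i) e ≤ (47 * k ^ 2) ^ 2 * resist u (fc j) e ∧
      resist u (fc j) e ≤ (47 * k ^ 2) ^ 2 * resist u (fc i) e := by
    intro i j hji hi e
    have hj : (j : ℝ) ≤ k / ε := le_trans (by exact_mod_cast hji) hi
    have hT : 36 * Fintype.card E * (μi j - μi i) ^ 2 / (μi j * μi i) ≤ 45 * k ^ 2 := by
      have l1 := hμlow i hi
      have l2 := hμlow j hj
      have hd0 : 0 ≤ μi j - μi i := by linarith [hμmono j i hji]
      have hd1 : μi j - μi i ≤ k / sm * μ := by
        have h1 : (i : ℝ) * ε / sm * μ ≤ k / sm * μ := by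
          gcongr; exact hiε i hi
        have : 0 ≤ (j : ℝ) * ε / sm * μ := by positivity
        linarith [hsub i, hsub j]
      rw [div_le_iff₀ (mul_pos (hμpos j hj) (hμpos i hi)), ← hsm2]
      have h1 : (μi j - μi i) ^ 2 ≤ (k / sm * μ) ^ 2 := by gcongr
      have h2 : (9 / 10 * μ) * (9 / 10 * μ) ≤ μi j * μi i :=
        mul_le_mul l2 l1 (by positivity) (hμpos j hj).le
      calc 36 * sm ^ 2 * (μi j - μi i) ^ 2 ≤ 36 * sm ^ 2 * (k / sm * μ) ^ 2 := by gcongr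
        _ = 36 * k ^ 2 * μ ^ 2 := by field_simp
        _ ≤ 45 * k ^ 2 * ((9 / 10 * μ) * (9 / 10 * μ)) := by
          have : 0 ≤ k ^ 2 * μ ^ 2 := by positivity
          linarith
        _ ≤ _ := by gcongr
    have hc := central_ratio hst hB hχ hP hF (hμpos j hj) (hμiF j) (hμpos i hi) (hμmono j i hji)
      (hfc j hj) (hfc i hi) hT e
    have hk2 : 1 ≤ k ^ 2 := one_le_pow₀ hk
    have hle : (45 * k ^ 2 + 2) ^ 2 ≤ (47 * k ^ 2) ^ 2 := by
      gcongr; linarith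
    have p1 := resist_pos (hfc i hi).1 e
    have p2 := resist_pos (hfc j hj).1 e
    exact ⟨hc.1.trans (by gcongr), hc.2.trans (by gcongr)⟩
  obtain ⟨x1, x2, x3, x4⟩ := exp_bounds
  intro i
  induction i using Nat.strong_induction_on with
  | _ i ih =>
  intro hi
  rcases i with _ | n
  · have h0 := hfc 0 hi
    obtain ⟨φ, hφ⟩ := h0.2.2
    rw [hf0]
    refine final_goal (γ := 0) (q := 0) (φ := φ) le_rfl (by norm_num) h0.1
      (fun x => lap_ker hB hconn h0.1 x) hB1 h0 ?_ ?_ ?_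
    · rw [h0.2.1]; simp
    · simp [wn]
    · simp [wn, hφ]
  · -- facts for previous iterates
    have hlt : ∀ j ≤ n, (j : ℝ) < k / ε := by
      intro j hj
      have : ((j : ℝ) + 1) ≤ ((n + 1 : ℕ) : ℝ) := by exact_mod_cast Nat.succ_le_succ hj
      linarith
    have hgood : ∀ j ≤ n, (∀ e, |f j e| < u e) ∧
        (∀ e, resist u (f j) e ≤ 5 / 4 * resist u (fc j) e) ∧
        (∀ e, resist u (fc j) e ≤ 5 / 4 * resist u (f j) e) := by
      intro j hj
      obtain ⟨g1, -, -, g4⟩ := ih j (by omega) (hlt j hj).le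
      have hp := resist_pos (hfc j (hlt j hj).le).1
      refine ⟨g1, fun e => ?_, fun e => ?_⟩
      · refine (g4 e).2.trans ?_
        have := (hp e).le
        gcongr
      · have h1 := (g4 e).1
        have : 4 / 5 * resist u (fc j) e ≤ Real.exp (-(0.2 : ℝ)) * resist u (fc j) e := by
          have := (hp e).le
          gcongr
        linarith
    have hS : ∀ j ≤ n, (∀ e, |f (j + 1) e| < u e) ∧
        (∀ e, resist u (f (j + 1)) e ≤ 2 * resist u (f j) e ∧
          resist u (f j) e ≤ 2 * resist u (f (j + 1)) e) ∧
        (∃ q : E → ℝ, Bᵀ *ᵥ f (j + 1) - Bᵀ *ᵥ f j - τ • χ = Bᵀ *ᵥ q ∧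
          wn (resist u (f j)) q ≤ 320 * ε ^ 2) ∧
        (∃ ψ : V → ℝ, wn (fun e => (resist u (f j) e)⁻¹) (fun e => (B *ᵥ ψ) e -
          (((u e - f (j + 1) e)⁻¹ - (u e + f (j + 1) e)⁻¹) -
            ((u e - f j e)⁻¹ - (u e + f j e)⁻¹))) ≤ 320 * ε ^ 2) := by
      intro j hj
      obtain ⟨g1, g2, g3⟩ := hgood j hj
      obtain ⟨s1, s2, s3, s4, s5, s6, s7⟩ := hstep j (hlt j hj)
      obtain ⟨y, hy, hyn⟩ := energy_bound hst hB hχ hP hF hμ (hμlow j (hlt j hj).le) (hμiF j)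
        (hfc j (hlt j hj).le) g1 hm0 g2
      exact step_full B g1 (fun x => lap_ker hB hconn g1 x) hB1 hy hyn hε0.le hε1 hτ0
        (by rw [hτ, ← hsm]; field_simp) s1 s2 s3 s4 s5 s6 s7
    have hfeas := (hS n le_rfl).1
    have hpn := resist_pos hfeas
    have hpj : ∀ j < n + 1, ∀ e, 0 < resist u (f j) e := fun j hj =>
      resist_pos (hgood j (by omega)).1
    have hk4 : 0 ≤ k ^ 4 := by positivity
    have hw1 : ∀ j < n + 1, ∀ e, resist u (f (n + 1)) e ≤ (100 * k ^ 2) ^ 2 * resist u (f j) e := by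
      intro j hj e
      have r1 := ((hS n le_rfl).2.1 e).1
      have r2 := (hgood n le_rfl).2.1 e
      have r3 := (hratio n j (by omega) (hlt n le_rfl).le e).1
      have r4 := (hgood j (by omega)).2.2 e
      have p := (hpj j hj e).le
      have r5 : (47 * k ^ 2) ^ 2 * resist u (fc j) e ≤
        (47 * k ^ 2) ^ 2 * (5 / 4 * resist u (f j) e) := by gcongr
      have : 0 ≤ k ^ 4 * resist u (f j) e := by positivity
      nlinarith
    have hw2 : ∀ j < n + 1, ∀ e, (resist u (f (n + 1)) e)⁻¹ ≤
        (100 * k ^ 2) ^ 2 * (resist u (f j) e)⁻¹ := by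
      intro j hj e
      have r1 := ((hS n le_rfl).2.1 e).2
      have r2 := (hgood n le_rfl).2.2 e
      have r3 := (hratio n j (by omega) (hlt n le_rfl).le e).2
      have r4 := (hgood j (by omega)).2.1 e
      have p := hpj j hj e
      have pn := hpn e
      have r5 : (47 * k ^ 2) ^ 2 * resist u (fc n) e ≤
        (47 * k ^ 2) ^ 2 * (5 / 4 * (2 * resist u (f (n + 1)) e)) := by
        gcongr; linarith
      have : 0 ≤ k ^ 4 * resist u (f (n + 1)) e := by positivity
      rw [← div_eq_mul_inv, le_div_iff₀ p, inv_mul_le_iff₀ pn]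
      nlinarith
    have hA : 0 ≤ 320 * ε ^ 2 := by positivity
    have hρ : 0 ≤ 100 * k ^ 2 := by positivity
    have h00 : (((0 : ℕ) : ℝ)) ≤ k / ε := by simp; positivity
    have hc0 := hfc 0 h00
    obtain ⟨q, hq, hqn⟩ := acc_flow (B := B) (χ := χ) (F := Fstar) (f := f) (μi := μi)
      (r := fun j => resist u (f j)) hA hρ (fun e => (hpn e).le) (by rw [hf0]; exact hc0.2.1) (n + 1)
      (fun j hj e => (hpj j hj e).le)
      (fun j hj => by rw [hdiff j]; exact (hS j (by omega)).2.2.1) hw1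
    obtain ⟨φ, hφ⟩ := acc_grad (B := B) (g := fun j e => (u e - f j e)⁻¹ - (u e + f j e)⁻¹)
      (r := fun j e => (resist u (f j) e)⁻¹) hA hρ (fun e => (inv_pos.2 (hpn e)).le)
      (by rw [hf0]; exact hc0.2.2) (n + 1)
      (fun j hj e => (inv_pos.2 (hpj j hj e)).le)
      (fun j hj => (hS j (by omega)).2.2.2) hw2
    have hγ : ((n + 1 : ℕ) : ℝ) * ((100 * k ^ 2) * (320 * ε ^ 2)) ≤ 1 / 10000 := by
      have h1 := hiε (n + 1) hi
      calc ((n + 1 : ℕ) : ℝ) * ((100 * k ^ 2) * (320 * ε ^ 2))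
          = (((n + 1 : ℕ) : ℝ) * ε) * (32000 * k ^ 2 * ε) := by ring
        _ ≤ k * (32000 * k ^ 2 * ε) := by gcongr
        _ = 32000 * (k ^ 3 * ε) := by ring
        _ ≤ _ := by rw [hkε]; norm_num
    exact final_goal (by norm_num) le_rfl hfeas (fun x => lap_ker hB hconn hfeas x) hB1
      (hfc (n + 1) hi) hq (hqn.trans hγ) (hφ.trans hγ)
end
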